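/- arXiv:1703.00744 — 13 statements merged into one kernel-verified Lean document; each statement's English description precedes it below -/
import Mathlib

section
/- Let f : ℝⁿ → ℝ be a polynomial and let K ⊆ ℝⁿ be a convex body. Then there exist constants C_{f,K} > 0 (depending only on f and K) and r_K ∈ ℕ (depending only on K) such that for all integers r ≥ r_K one has f̲^(r)_K − f_min,K ≤ C_{f,K}/√r. -/
open MeasureTheory Real

/-- Lasserre's measure-based upper bound `f̲^(r)_K`: the infimum of `∫_K h f`
over sum-of-squares polynomial densities `h` of degree at most `2r` with `∫_K h = 1`. -/
noncomputable def lasserreBound (n : ℕ) (f : (Fin n → ℝ) → ℝ) (K : Set (Fin n → ℝ)) (r : ℕ) : ℝ :=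
  sInf { y : ℝ | ∃ (m : ℕ) (p : Fin m → MvPolynomial (Fin n) ℝ),
    (∀ i, (p i).totalDegree ≤ r) ∧
    (∫ x in K, MvPolynomial.eval x (∑ i, p i ^ 2)) = 1 ∧
    y = ∫ x in K, MvPolynomial.eval x (∑ i, p i ^ 2) * f x }

/-- Pointwise scaling inequality. -/
lemma aux_alg (t : ℝ) (ht : 0 ≤ t) (ht4 : 4 * t ≤ 1) (M : ℕ) (hM : 0 < M) :
    √(4 * t) * (1 - 4 * t) ^ M ≤ (1 / √(M : ℝ)) * (1 - t) ^ M := by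
  have hMr : (0 : ℝ) < M := by exact_mod_cast hM
  have hs : 0 < √(M : ℝ) := Real.sqrt_pos.2 hMr
  have h1 : (1 - 4 * t) ^ M ≤ (1 - t) ^ M * (1 - 3 * t) ^ M := by
    rw [← mul_pow]
    apply pow_le_pow_left₀ (by linarith)
    nlinarith
  have hb : 1 + (M : ℝ) * (3 * t) ≤ (1 + 3 * t) ^ M :=
    one_add_mul_le_pow (by linarith) M
  have h2 : (1 - 3 * t) ^ M * (1 + (M : ℝ) * (3 * t)) ≤ 1 := by
    calc (1 - 3 * t) ^ M * (1 + (M : ℝ) * (3 * t)) ≤ (1 - 3 * t) ^ M * (1 + 3 * t) ^ M := by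
          apply mul_le_mul_of_nonneg_left hb
          apply pow_nonneg; linarith
      _ = ((1 - 3 * t) * (1 + 3 * t)) ^ M := by rw [mul_pow]
      _ ≤ 1 := by
          apply pow_le_one₀ <;> nlinarith
  have h3 : √(M : ℝ) * √(4 * t) ≤ 1 + (M : ℝ) * (3 * t) := by
    rw [← Real.sqrt_mul hMr.le]
    apply Real.sqrt_le_iff.2
    have : 0 ≤ (M : ℝ) * t := by positivity
    constructor <;> nlinarith [sq_nonneg (1 - (M : ℝ) * t)]
  have hp : 0 ≤ (1 - 3 * t) ^ M := by apply pow_nonneg; linarith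
  have hp1 : 0 ≤ (1 - t) ^ M := by apply pow_nonneg; linarith
  have h4 : √(M : ℝ) * √(4 * t) * (1 - 3 * t) ^ M ≤ 1 := by
    calc _ ≤ (1 + (M : ℝ) * (3 * t)) * (1 - 3 * t) ^ M := mul_le_mul_of_nonneg_right h3 hp
      _ ≤ 1 := by linarith
  rw [div_mul_eq_mul_div, one_mul, le_div_iff₀ hs]
  calc √(4 * t) * (1 - 4 * t) ^ M * √(M : ℝ)
      ≤ √(4 * t) * ((1 - t) ^ M * (1 - 3 * t) ^ M) * √(M : ℝ) := by gcongr
    _ = (√(M : ℝ) * √(4 * t) * (1 - 3 * t) ^ M) * (1 - t) ^ M := by ring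
    _ ≤ 1 * (1 - t) ^ M := mul_le_mul_of_nonneg_right h4 hp1
    _ = _ := one_mul _

/-- Squared Euclidean distance. -/
def auxS {n : ℕ} (a x : Fin n → ℝ) : ℝ := ∑ i, (x i - a i) ^ 2

lemma auxS_nonneg {n : ℕ} (a x : Fin n → ℝ) : 0 ≤ auxS a x :=
  Finset.sum_nonneg fun _ _ => sq_nonneg _

lemma auxS_cont {n : ℕ} (a : Fin n → ℝ) : Continuous (auxS a) := by
  unfold auxS; fun_prop

lemma aux_int {n : ℕ} (K : Set (Fin n → ℝ)) (hK : IsCompact K) (hc : Convex ℝ K)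
    (a : Fin n → ℝ) (ha : a ∈ K) (c : ℝ) (hc0 : 0 < c) (hcS : ∀ x ∈ K, c * auxS a x ≤ 1)
    (M : ℕ) (hM : 0 < M) :
    ∫ x in K, √(c * auxS a x) * (1 - c * auxS a x) ^ M ≤
      (2 ^ n / √(M : ℝ)) * ∫ x in K, (1 - c * auxS a x) ^ M := by
  have hScont := auxS_cont a
  set F : (Fin n → ℝ) → ℝ := fun x => √(c * auxS a x) * (1 - c * auxS a x) ^ M with hF
  set g : (Fin n → ℝ) → ℝ := fun x => (1 - c * auxS a x) ^ M with hg
  have hgc : Continuous g := by fun_prop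
  have hgi : Integrable (K.indicator g) := by
    rw [integrable_indicator_iff hK.measurableSet]
    exact hgc.continuousOn.integrableOn_compact hK
  have hgnn : ∀ x, 0 ≤ K.indicator g x := by
    intro x
    apply Set.indicator_nonneg
    intro x hx
    exact pow_nonneg (by linarith [hcS x hx]) _
  have hFnn : ∀ x, 0 ≤ K.indicator F x := by
    intro x
    apply Set.indicator_nonneg
    intro x hx
    exact mul_nonneg (Real.sqrt_nonneg _) (pow_nonneg (by linarith [hcS x hx]) _)
  have key : ∀ y, K.indicator F (a + (2 : ℝ) • y) ≤ (1 / √(M : ℝ)) * K.indicator g (a + y) := by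
    intro y
    by_cases hy : a + (2 : ℝ) • y ∈ K
    · have hyh : a + y ∈ K := by
        have := hc ha hy (a := 1/2) (b := 1/2) (by norm_num) (by norm_num) (by norm_num)
        convert this using 1
        ext i; simp; ring
      rw [Set.indicator_of_mem hy, Set.indicator_of_mem hyh]
      have hS : auxS a (a + (2 : ℝ) • y) = 4 * auxS a (a + y) := by
        simp only [auxS, Finset.mul_sum]
        apply Finset.sum_congr rfl
        intro i _
        simp; ring
      have h1 := hcS _ hy
      simp only [hF, hg, hS]
      rw [hS] at h1
      have := aux_alg (c * auxS a (a + y)) (mul_nonneg hc0.le (auxS_nonneg _ _))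
        (by linarith) M hM
      rwa [show c * (4 * auxS a (a + y)) = 4 * (c * auxS a (a + y)) by ring]
    · rw [Set.indicator_of_notMem hy]
      exact mul_nonneg (by positivity) (hgnn _)
  have hi := integral_mono_of_nonneg (μ := (volume : Measure (Fin n → ℝ)))
    (Filter.Eventually.of_forall fun y => hFnn (a + (2 : ℝ) • y))
    ((hgi.comp_add_left a).const_mul (1 / √(M : ℝ))) (Filter.Eventually.of_forall key)
  rw [integral_const_mul, integral_add_left_eq_self (fun x => K.indicator g x),
    Measure.integral_comp_smul volume (fun x => K.indicator F (a + x)),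
    integral_add_left_eq_self (fun x => K.indicator F x),
    integral_indicator hK.measurableSet, integral_indicator hK.measurableSet] at hi
  simp only [Module.finrank_fintype_fun_eq_card, Fintype.card_fin, smul_eq_mul] at hi
  rw [abs_of_pos (by positivity), inv_mul_le_iff₀ (by positivity)] at hi
  calc _ ≤ _ := hi
    _ = _ := by ring

lemma aux_lip {n : ℕ} (K : Set (Fin n → ℝ)) (hK : IsCompact K) (a : Fin n → ℝ)
    (p : MvPolynomial (Fin n) ℝ) : ∃ L : ℝ, 0 ≤ L ∧ ∀ x ∈ K,
      |MvPolynomial.eval x p - MvPolynomial.eval a p| ≤ L * √(auxS a x) := by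
  induction p using MvPolynomial.induction_on with
  | C r => exact ⟨0, le_rfl, by simp⟩
  | add p q hp hq =>
    obtain ⟨L, hL, h⟩ := hp
    obtain ⟨Lc, hLc, hh⟩ := hq
    refine ⟨L + Lc, by positivity, fun x hx => ?_⟩
    have e : MvPolynomial.eval x (p + q) - MvPolynomial.eval a (p + q) =
      (MvPolynomial.eval x p - MvPolynomial.eval a p) +
      (MvPolynomial.eval x q - MvPolynomial.eval a q) := by simp; ring
    rw [e]
    linarith [abs_add_le (MvPolynomial.eval x p - MvPolynomial.eval a p)
      (MvPolynomial.eval x q - MvPolynomial.eval a q), h x hx, hh x hx]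
  | mul_X p i hp =>
    obtain ⟨L, hL, h⟩ := hp
    obtain ⟨B, hB⟩ := hK.exists_bound_of_continuousOn (f := fun x : Fin n → ℝ => x i)
      (by fun_prop)
    refine ⟨L * |B| + |MvPolynomial.eval a p|, by positivity, fun x hx => ?_⟩
    have e : MvPolynomial.eval x (p * MvPolynomial.X i) - MvPolynomial.eval a (p * MvPolynomial.X i)
      = (MvPolynomial.eval x p - MvPolynomial.eval a p) * x i +
        MvPolynomial.eval a p * (x i - a i) := by simp; ring
    have h1 : |x i - a i| ≤ √(auxS a x) := by
      apply Real.abs_le_sqrt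
      exact Finset.single_le_sum (f := fun i => (x i - a i) ^ 2) (fun _ _ => sq_nonneg _)
        (Finset.mem_univ i)
    have h2 : |x i| ≤ |B| := (hB x hx).trans (le_abs_self B)
    rw [e]
    calc _ ≤ _ := abs_add_le _ _
      _ = |MvPolynomial.eval x p - MvPolynomial.eval a p| * |x i| +
        |MvPolynomial.eval a p| * |x i - a i| := by rw [abs_mul, abs_mul]
      _ ≤ (L * √(auxS a x)) * |B| + |MvPolynomial.eval a p| * √(auxS a x) := by
        have := h x hx
        gcongr
      _ = _ := by ring

/-- The polynomial `1 - c * |x - a|²`. -/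
noncomputable def auxQ {n : ℕ} (a : Fin n → ℝ) (c : ℝ) : MvPolynomial (Fin n) ℝ :=
  1 - MvPolynomial.C c * ∑ i, (MvPolynomial.X i - MvPolynomial.C (a i)) ^ 2

lemma auxQ_eval {n : ℕ} (a : Fin n → ℝ) (c : ℝ) (x : Fin n → ℝ) :
    MvPolynomial.eval x (auxQ a c) = 1 - c * auxS a x := by
  simp [auxQ, auxS]

lemma auxQ_deg {n : ℕ} (a : Fin n → ℝ) (c : ℝ) : (auxQ a c).totalDegree ≤ 2 := by
  unfold auxQ
  refine (MvPolynomial.totalDegree_sub _ _).trans (max_le (by simp) ?_)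
  refine (MvPolynomial.totalDegree_mul _ _).trans ?_
  rw [MvPolynomial.totalDegree_C, zero_add]
  apply MvPolynomial.totalDegree_finsetSum_le
  intro i _
  refine (MvPolynomial.totalDegree_pow _ _).trans ?_
  have : (MvPolynomial.X i - MvPolynomial.C (a i) : MvPolynomial (Fin n) ℝ).totalDegree ≤ 1 := by
    refine (MvPolynomial.totalDegree_sub _ _).trans (max_le (by simp) (by simp))
  omega

theorem stmt0 (n : ℕ) (p : MvPolynomial (Fin n) ℝ) (f : (Fin n → ℝ) → ℝ)
    (hf : f = fun x => MvPolynomial.eval x p)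
    (K : Set (Fin n → ℝ)) (hKcomp : IsCompact K) (hKconv : Convex ℝ K)
    (hKint : (interior K).Nonempty) :
    ∃ C : ℝ, 0 < C ∧ ∃ rK : ℕ, ∀ r : ℕ, rK ≤ r →
      lasserreBound n f K r - sInf (f '' K) ≤ C / Real.sqrt r := by
  have hcp : ∀ q : MvPolynomial (Fin n) ℝ, Continuous fun x : Fin n → ℝ => MvPolynomial.eval x q :=
    fun q => MvPolynomial.continuous_eval q
  have hfc : Continuous f := by rw [hf]; exact hcp p
  have hKne : K.Nonempty := hKint.mono interior_subset
  obtain ⟨a, ha, hamin⟩ := hKcomp.exists_isMinOn hKne hfc.continuousOn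
  have hmin : ∀ x ∈ K, f a ≤ f x := fun x hx => hamin hx
  have hinf : sInf (f '' K) = f a := by
    apply IsLeast.csInf_eq
    refine ⟨⟨a, ha, rfl⟩, ?_⟩
    rintro _ ⟨x, hx, rfl⟩
    exact hmin x hx
  rw [hinf]
  obtain ⟨L, hL, hLip⟩ := aux_lip K hKcomp a p
  obtain ⟨B, hB⟩ := hKcomp.exists_bound_of_continuousOn (auxS_cont a).continuousOn
  set c : ℝ := 1 / (2 * (|B| + 1)) with hc
  have hc0 : 0 < c := by positivity
  have hcS : ∀ x ∈ K, c * auxS a x ≤ 1 / 2 := by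
    intro x hx
    have h1 : auxS a x ≤ |B| := (le_abs_self _).trans ((hB x hx).trans (le_abs_self B))
    rw [hc, div_mul_eq_mul_div, div_le_div_iff₀ (by positivity) (by norm_num)]
    linarith
  set Lc : ℝ := L / √c with hLc
  have hLcnn : 0 ≤ Lc := by positivity
  have hLipc : ∀ x ∈ K, f x - f a ≤ Lc * √(c * auxS a x) := by
    intro x hx
    have h1 := (le_abs_self _).trans (hLip x hx)
    rw [hf]
    refine h1.trans (le_of_eq ?_)
    rw [Real.sqrt_mul hc0.le, hLc]
    have : √c ≠ 0 := (Real.sqrt_pos.2 hc0).ne'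
    field_simp
  have hvol : 0 < volume K := by
    exact (isOpen_interior.measure_pos volume hKint).trans_le (measure_mono interior_subset)
  have hIntg : ∀ g : (Fin n → ℝ) → ℝ, Continuous g → IntegrableOn g K := fun g hg =>
    hg.continuousOn.integrableOn_compact hKcomp
  refine ⟨(Lc + 1) * (2 ^ n * √2), by positivity, 2, fun r hr => ?_⟩
  set m := r / 2 with hm
  have hm1 : 0 < 2 * m := by omega
  have hScont := auxS_cont a
  set I : ℝ := ∫ x in K, (1 - c * auxS a x) ^ (2 * m) with hI
  have hgc : Continuous fun x => (1 - c * auxS a x) ^ (2 * m) := by fun_prop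
  have hIpos : 0 < I := by
    rw [hI, setIntegral_pos_iff_support_of_nonneg_ae]
    · refine hvol.trans_le (measure_mono fun x hx => ⟨?_, hx⟩)
      have := hcS x hx
      exact pow_ne_zero _ (by linarith)
    · exact Filter.Eventually.of_forall fun x => by
        simp only [Pi.zero_apply]; rw [pow_mul]; positivity
    · exact hIntg _ hgc
  have hkey := aux_int K hKcomp hKconv a ha c hc0 (fun x hx => (hcS x hx).trans (by norm_num))
    (2 * m) hm1
  have heval : ∀ x, MvPolynomial.eval x (∑ _i : Fin 1,
      (MvPolynomial.C (1 / √I) * auxQ a c ^ m) ^ 2) = I⁻¹ * (1 - c * auxS a x) ^ (2 * m) := by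
    intro x
    simp only [Finset.univ_unique, Finset.sum_const, Finset.card_singleton, one_smul, map_pow,
      map_mul, MvPolynomial.eval_C, auxQ_eval]
    rw [mul_pow, div_pow, Real.sq_sqrt hIpos.le]
    ring
  have hle : lasserreBound n f K r ≤ I⁻¹ * ∫ x in K, (1 - c * auxS a x) ^ (2 * m) * f x := by
    apply csInf_le
    · refine ⟨f a, ?_⟩
      rintro y ⟨k, q, -, hq1, rfl⟩
      have h1 : ∫ x in K, MvPolynomial.eval x (∑ i, q i ^ 2) * f a = f a := by
        rw [integral_mul_const, hq1, one_mul]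
      rw [← h1]
      apply setIntegral_mono_on (hIntg _ ((hcp _).mul continuous_const))
        (hIntg _ ((hcp _).mul hfc)) hKcomp.measurableSet
      intro x hx
      apply mul_le_mul_of_nonneg_left (hmin x hx)
      beta_reduce
      rw [map_sum]
      exact Finset.sum_nonneg fun i _ => by rw [map_pow]; positivity
    · refine ⟨1, fun _ => MvPolynomial.C (1 / √I) * auxQ a c ^ m, fun _ => ?_, ?_, ?_⟩
      · refine (MvPolynomial.totalDegree_mul _ _).trans ?_
        rw [MvPolynomial.totalDegree_C, zero_add]
        refine (MvPolynomial.totalDegree_pow _ _).trans ?_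
        have := Nat.mul_le_mul_left m (auxQ_deg a c)
        omega
      · simp only [heval]
        rw [integral_const_mul]
        exact inv_mul_cancel₀ hIpos.ne'
      · simp only [heval]
        rw [← integral_const_mul]
        simp only [mul_assoc]
  have hup : ∫ x in K, (1 - c * auxS a x) ^ (2 * m) * f x ≤
      f a * I + Lc * ∫ x in K, √(c * auxS a x) * (1 - c * auxS a x) ^ (2 * m) := by
    rw [hI, ← integral_const_mul, ← integral_const_mul, ← integral_add]
    · apply setIntegral_mono_on (hIntg _ (hgc.mul hfc)) (hIntg _ (by fun_prop)) hKcomp.measurableSet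
      intro x hx
      have h1 := hLipc x hx
      have h2 : 0 ≤ (1 - c * auxS a x) ^ (2 * m) := by rw [pow_mul]; positivity
      simp only [Pi.mul_apply]
      nlinarith
    · exact hIntg _ (by fun_prop)
    · exact hIntg _ (by fun_prop)
  have hfin : lasserreBound n f K r ≤ f a + Lc * (2 ^ n / √((2 * m : ℕ) : ℝ)) := by
    calc _ ≤ _ := hle
      _ ≤ I⁻¹ * (f a * I + Lc * ((2 ^ n / √((2 * m : ℕ) : ℝ)) * I)) := by
        apply mul_le_mul_of_nonneg_left _ (by positivity)
        exact hup.trans (by gcongr)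
      _ = _ := by field_simp
  have hsq : √(r : ℝ) ≤ √2 * √((2 * m : ℕ) : ℝ) := by
    rw [← Real.sqrt_mul (by norm_num)]
    apply Real.sqrt_le_sqrt
    have : r ≤ 2 * (2 * m) := by omega
    exact_mod_cast this
  have hMpos : 0 < √((2 * m : ℕ) : ℝ) := Real.sqrt_pos.2 (by exact_mod_cast hm1)
  have hrpos : 0 < √(r : ℝ) := Real.sqrt_pos.2 (by exact_mod_cast (by omega : 0 < r))
  have h1 : 2 ^ n / √((2 * m : ℕ) : ℝ) ≤ 2 ^ n * √2 / √(r : ℝ) := by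
    rw [div_le_div_iff₀ hMpos hrpos]
    calc (2 : ℝ) ^ n * √(r : ℝ) ≤ 2 ^ n * (√2 * √((2 * m : ℕ) : ℝ)) := by gcongr
      _ = _ := by ring
  calc lasserreBound n f K r - f a ≤ Lc * (2 ^ n / √((2 * m : ℕ) : ℝ)) := by linarith
    _ ≤ (Lc + 1) * (2 ^ n * √2 / √(r : ℝ)) := by
      apply mul_le_mul (by linarith) h1 (by positivity) (by positivity)
    _ = _ := by ring
end

section
/- Let c ∈ ℝⁿ with ‖c‖₂ = 1, let f(x) = cᵀx, and let K ⊆ ℝⁿ be a convex body. Then for every t > 0, E_t[f] − min_{x∈K} f(x) ≤ n·t. -/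
open MeasureTheory Real

/-- The Boltzmann expectation `E_t[f] = (∫_K f e^{-f/t}) / (∫_K e^{-f/t})`. -/
noncomputable def boltzmannExp (n : ℕ) (f : (Fin n → ℝ) → ℝ) (K : Set (Fin n → ℝ)) (t : ℝ) : ℝ :=
  (∫ x in K, f x * Real.exp (-f x / t)) / (∫ x in K, Real.exp (-f x / t))

theorem boltz_aux (n : ℕ) (K : Set (Fin n → ℝ)) (hKm : MeasurableSet K) (hKconv : Convex ℝ K)
    (x0 : Fin n → ℝ) (hx0 : x0 ∈ K) (h : (Fin n → ℝ) → ℝ) (hn : ∀ x, 0 ≤ h x)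
    (hi : IntegrableOn h K) (s : ℝ) (hs0 : 0 < s) (hs1 : s ≤ 1) :
    s ^ n * ∫ x in K, h (x0 + s • (x - x0)) ≤ ∫ x in K, h x := by
  have hsub : (fun x => x0 + s • (x - x0)) '' K ⊆ K := by
    rintro _ ⟨x, hx, rfl⟩
    exact hKconv.add_smul_sub_mem hx0 hx ⟨hs0.le, hs1⟩
  have key := integral_image_eq_integral_abs_det_fderiv_smul (volume : Measure (Fin n → ℝ)) hKm
    (f := fun x => x0 + s • (x - x0)) (f' := fun _ => s • ContinuousLinearMap.id ℝ (Fin n → ℝ))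
    (fun x _ => by
      have := (((hasFDerivAt_id (𝕜 := ℝ) x).sub_const x0).const_smul s).const_add x0
      exact this.hasFDerivWithinAt)
    (by
      intro x _ y _ hxy
      simpa [hs0.ne'] using hxy) h
  have hdet : (s • ContinuousLinearMap.id ℝ (Fin n → ℝ)).det = s ^ n := by
    simp [ContinuousLinearMap.det]
  rw [hdet, abs_of_pos (pow_pos hs0 n)] at key
  simp only [smul_eq_mul] at key
  rw [integral_const_mul] at key
  rw [← key]
  exact setIntegral_mono_set hi (Filter.Eventually.of_forall hn) hsub.eventuallyLE

theorem stmt1 (n : ℕ) (c : Fin n → ℝ) (hc : Real.sqrt (∑ i, c i ^ 2) = 1)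
    (f : (Fin n → ℝ) → ℝ) (hf : f = fun x => ∑ i, c i * x i)
    (K : Set (Fin n → ℝ)) (hKcomp : IsCompact K) (hKconv : Convex ℝ K)
    (hKint : (interior K).Nonempty)
    (t : ℝ) (ht : 0 < t) :
    boltzmannExp n f K t - sInf (f '' K) ≤ n * t := by
  have hfc : Continuous f := by rw [hf]; fun_prop
  obtain ⟨x0, hx0, hmin⟩ := hKcomp.exists_isMinOn (hKint.mono interior_subset) hfc.continuousOn
  have hm : sInf (f '' K) = f x0 :=
    IsLeast.csInf_eq ⟨⟨x0, hx0, rfl⟩, by rintro _ ⟨x, hx, rfl⟩; exact hmin hx⟩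
  have hint : ∀ h : (Fin n → ℝ) → ℝ, Continuous h → IntegrableOn h K := fun h hh =>
    hh.continuousOn.integrableOn_compact hKcomp
  have haff : ∀ (s : ℝ) x, f (x0 + s • (x - x0)) = f x0 + s * (f x - f x0) := by
    intro s x
    simp only [hf, Pi.add_apply, Pi.smul_apply, Pi.sub_apply, smul_eq_mul]
    rw [← Finset.sum_sub_distrib, Finset.mul_sum, ← Finset.sum_add_distrib]
    exact Finset.sum_congr rfl fun i _ => by ring
  have hKm := hKcomp.measurableSet
  set Z := ∫ x in K, Real.exp (-f x / t) with hZ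
  set A := ∫ x in K, f x * Real.exp (-f x / t) with hA
  have hiZ : IntegrableOn (fun x => Real.exp (-f x / t)) K := hint _ (by fun_prop)
  have hiA : IntegrableOn (fun x => f x * Real.exp (-f x / t)) K := hint _ (by fun_prop)
  have hZpos : 0 < Z := by
    have hv : 0 < volume K :=
      (isOpen_interior.measure_pos volume hKint).trans_le (measure_mono interior_subset)
    rw [hZ, setIntegral_pos_iff_support_of_nonneg_ae
      (Filter.Eventually.of_forall fun x => (Real.exp_pos _).le) hiZ]
    have : Function.support (fun x => Real.exp (-f x / t)) = Set.univ := by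
      ext x; simp [(Real.exp_pos _).ne']
    rwa [this, Set.univ_inter]
  have hmain : ∀ r ∈ Set.Ioo (0:ℝ) 1,
      (1 - r) ^ n * (Z + r * ((A - f x0 * Z) / t)) ≤ Z := by
    intro r ⟨hr0, hr1⟩
    refine le_trans ?_ (boltz_aux n K hKm hKconv x0 hx0 _ (fun x => (Real.exp_pos _).le) hiZ (1 - r)
      (by linarith) (by linarith))
    refine mul_le_mul_of_nonneg_left ?_ (pow_nonneg (by linarith) n)
    have e : Z + r * ((A - f x0 * Z) / t) = ∫ x in K, (Real.exp (-f x / t) +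
        r / t * (f x * Real.exp (-f x / t) - f x0 * Real.exp (-f x / t))) := by
      rw [integral_add hiZ (hint _ (by fun_prop)), integral_const_mul,
        integral_sub hiA (hiZ.const_mul _), integral_const_mul]
      ring
    rw [e]
    refine integral_mono (hint _ (by fun_prop)) (hint _ (by fun_prop)) fun x => ?_
    simp only [haff]
    have h1 : -(f x0 + (1 - r) * (f x - f x0)) / t = -f x / t + r / t * (f x - f x0) := by ring
    rw [h1, Real.exp_add]
    have := mul_le_mul_of_nonneg_left (Real.add_one_le_exp (r / t * (f x - f x0)))
      (Real.exp_pos (-f x / t)).le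
    linarith
  have hB0 : 0 ≤ (A - f x0 * Z) / t := by
    refine div_nonneg ?_ ht.le
    rw [hA, hZ, ← integral_const_mul, ← integral_sub hiA (hiZ.const_mul _)]
    refine setIntegral_nonneg hKm fun x hx => ?_
    rw [← sub_mul]
    exact mul_nonneg (sub_nonneg.2 (hmin hx)) (Real.exp_pos _).le
  set B := (A - f x0 * Z) / t with hB
  have hlim : B ≤ n * Z := by
    have ht' : Filter.Tendsto (fun r : ℝ => n * Z + n * r * B) (nhdsWithin 0 (Set.Ioi 0))
        (nhds (n * Z)) := by
      have : Continuous (fun r : ℝ => n * Z + n * r * B) := by fun_prop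
      have h2 := this.tendsto 0
      simp only [mul_zero, zero_mul, add_zero] at h2
      exact h2.mono_left nhdsWithin_le_nhds
    refine ge_of_tendsto ht' ?_
    filter_upwards [Ioo_mem_nhdsGT (zero_lt_one' ℝ)] with r hr
    have h1 := hmain r hr
    have h2 := one_add_mul_le_pow (a := -r) (by linarith [hr.2]) n
    have h3 : 0 ≤ Z + r * B := by have := mul_nonneg hr.1.le hB0; linarith
    have h4 := mul_le_mul_of_nonneg_right h2 h3
    rw [← sub_eq_add_neg] at h4
    have h5 : r * B ≤ r * (n * Z + n * r * B) := by nlinarith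
    exact le_of_mul_le_mul_left h5 hr.1
  rw [hm]
  unfold boltzmannExp
  rw [← hZ, ← hA, sub_le_iff_le_add, div_le_iff₀ hZpos]
  rw [hB, div_le_iff₀ ht] at hlim
  linarith
end

section
/- Let f : ℝⁿ → ℝ be a convex continuous function and let K ⊆ ℝⁿ be a convex body. Then for every t > 0, E_t[f] − min_{x∈K} f(x) ≤ n·t. -/
open MeasureTheory Real

theorem stmt2 (n : ℕ) (f : (Fin n → ℝ) → ℝ)
    (hfconv : ConvexOn ℝ Set.univ f) (hfcont : Continuous f)
    (K : Set (Fin n → ℝ)) (hKcomp : IsCompact K) (hKconv : Convex ℝ K)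
    (hKint : (interior K).Nonempty)
    (t : ℝ) (ht : 0 < t) :
    boltzmannExp n f K t - sInf (f '' K) ≤ n * t := by
  have hKne : K.Nonempty := hKint.mono interior_subset
  obtain ⟨x0, hx0, hmin⟩ := hKcomp.exists_sInf_image_eq hKne hfcont.continuousOn
  rw [hmin]
  set m := f x0 with hm
  have hle : ∀ x ∈ K, m ≤ f x := fun x hx => by
    rw [← hmin]
    exact csInf_le (hKcomp.image hfcont).bddBelow ⟨x, hx, rfl⟩
  have hKm : MeasurableSet K := hKcomp.measurableSet
  set w : (Fin n → ℝ) → ℝ := fun x => Real.exp (-f x / t) with hw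
  have hwc : Continuous w := by fun_prop
  have hwi : IntegrableOn w K := hwc.continuousOn.integrableOn_compact hKcomp
  have hfwi : IntegrableOn (fun x => f x * w x) K :=
    (hfcont.mul hwc).continuousOn.integrableOn_compact hKcomp
  have hgwi : IntegrableOn (fun x => (f x - m) * w x) K :=
    ((hfcont.sub continuous_const).mul hwc).continuousOn.integrableOn_compact hKcomp
  have hvol : 0 < volume K :=
    (isOpen_interior.measure_pos volume hKint).trans_le (measure_mono interior_subset)
  have hZ : 0 < ∫ x in K, w x := by
    rw [setIntegral_pos_iff_support_of_nonneg_ae (ae_of_all _ fun x => (Real.exp_pos _).le) hwi]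
    have : Function.support w = Set.univ := by
      ext x; simp [hw, (Real.exp_pos _).ne']
    rw [this, Set.univ_inter]; exact hvol
  have hA : ∫ x in K, (f x - m) * w x = (∫ x in K, f x * w x) - m * ∫ x in K, w x := by
    rw [← integral_const_mul, ← integral_sub hfwi (hwi.const_mul m)]
    congr 1; ext x; ring
  set Z := ∫ x in K, w x with hZdef
  set A := ∫ x in K, (f x - m) * w x with hAdef
  have key : ∀ s : ℝ, 0 < s → s < 1 → s ^ n * A ≤ n * t * Z := by
    intro s hs0 hs1
    let φ : (Fin n → ℝ) → (Fin n → ℝ) := fun x => s • x + (1 - s) • x0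
    have hφd : ∀ x ∈ K, HasFDerivWithinAt φ
        (s • ContinuousLinearMap.id ℝ (Fin n → ℝ)) K x := fun x _ =>
      (((hasFDerivAt_id x).const_smul s).add_const _).hasFDerivWithinAt
    have hinj : Set.InjOn φ K := by
      intro x _ y _ hxy
      have : s • x = s • y := add_right_cancel hxy
      exact smul_right_injective _ hs0.ne' this
    have himg : φ '' K ⊆ K := by
      rintro _ ⟨x, hx, rfl⟩
      exact hKconv hx hx0 hs0.le (by linarith) (by ring)
    have h1 : ∫ x in φ '' K, w x = s ^ n * ∫ x in K, w (φ x) := by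
      rw [integral_image_eq_integral_abs_det_fderiv_smul volume hKm hφd hinj w]
      have hdet : (s • ContinuousLinearMap.id ℝ (Fin n → ℝ)).det = s ^ n := by
        simp [ContinuousLinearMap.det]
      simp only [hdet, abs_of_pos (pow_pos hs0 n), smul_eq_mul]
      rw [integral_const_mul]
    have h2 : ∫ x in φ '' K, w x ≤ Z :=
      setIntegral_mono_set hwi (ae_of_all _ fun x => (Real.exp_pos _).le)
        (Filter.Eventually.of_forall himg)
    have hφc : Continuous φ := by fun_prop
    have h3 : Z + (1 - s) / t * A ≤ ∫ x in K, w (φ x) := by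
      rw [hAdef, hZdef, ← integral_const_mul, ← integral_add hwi (hgwi.const_mul _)]
      apply setIntegral_mono_on (hwi.add (hgwi.const_mul _))
        ((hwc.comp hφc).continuousOn.integrableOn_compact hKcomp) hKm
      intro x hx
      have hc : f (φ x) ≤ s * f x + (1 - s) * m :=
        hfconv.2 (Set.mem_univ x) (Set.mem_univ x0) hs0.le (by linarith) (by ring)
      have he : w x * Real.exp ((1 - s) / t * (f x - m)) ≤ w (φ x) := by
        simp only [hw]
        rw [← Real.exp_add, Real.exp_le_exp]
        have : -f x / t + (1 - s) / t * (f x - m) = -(s * f x + (1 - s) * m) / t := by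
          field_simp; ring
        rw [this]
        gcongr
      have h4 := Real.add_one_le_exp ((1 - s) / t * (f x - m))
      have h5 := mul_le_mul_of_nonneg_left h4 (Real.exp_pos (-f x / t)).le
      refine le_trans (le_of_eq ?_) (h5.trans he)
      simp only [hw, Pi.add_apply]; ring
    have h6 : s ^ n * (Z + (1 - s) / t * A) ≤ Z :=
      (mul_le_mul_of_nonneg_left h3 (by positivity)).trans (h1 ▸ h2)
    have hb : 1 - s ^ n ≤ n * (1 - s) := by
      have := one_add_mul_le_pow (a := s - 1) (by linarith) n
      rw [add_sub_cancel] at this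
      linarith
    have h7 : (1 - s) * (s ^ n * A) ≤ (1 - s) * (n * t * Z) := by
      have e : (1 - s) * (s ^ n * A) = t * (s ^ n * (Z + (1 - s) / t * A) - s ^ n * Z) := by
        field_simp; ring
      rw [e]
      have : t * (s ^ n * (Z + (1 - s) / t * A) - s ^ n * Z) ≤ t * ((1 - s ^ n) * Z) := by
        gcongr; linarith
      refine this.trans ?_
      have := mul_le_mul_of_nonneg_left hb (mul_pos ht hZ).le
      linarith
    exact le_of_mul_le_mul_left h7 (by linarith)
  have hfin : A ≤ n * t * Z := by
    have hc : Filter.Tendsto (fun s : ℝ => s ^ n * A) (nhdsWithin 1 (Set.Iio 1)) (nhds A) := by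
      have : Continuous (fun s : ℝ => s ^ n * A) := by fun_prop
      simpa using (this.tendsto 1).mono_left (nhdsWithin_le_nhds (s := Set.Iio 1))
    refine le_of_tendsto hc ?_
    filter_upwards [Ioo_mem_nhdsLT (zero_lt_one (α := ℝ))] with s hs
    exact key s hs.1 hs.2
  have : boltzmannExp n f K t = (∫ x in K, f x * w x) / Z := rfl
  rw [this, sub_le_iff_le_add, div_le_iff₀ hZ]
  linarith
end

section
/- Let f : ℝⁿ → ℝ be continuous, let K ⊆ ℝⁿ be compact with positive Lebesgue measure, let t > 0, and set E := E_t[f]. Assume that ∫_K (e^{−f(x)/t} − e^{−E/t}) dx ≠ 0. Then, interpreting the inner integrals ∫_{f(x)}^{E} as signed (oriented) integrals, one has (∫_K ∫_{f(x)}^{E} s·e^{−s/t} ds dx) / (∫_K ∫_{f(x)}^{E} e^{−s/t} ds dx) = E + t. -/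
open MeasureTheory Real

theorem stmt3 (n : ℕ) (f : (Fin n → ℝ) → ℝ) (hf : Continuous f)
    (K : Set (Fin n → ℝ)) (hKcomp : IsCompact K) (hKpos : 0 < volume K)
    (t : ℝ) (ht : 0 < t) (E : ℝ) (hE : E = boltzmannExp n f K t)
    (hne : (∫ x in K, (Real.exp (-f x / t) - Real.exp (-E / t))) ≠ 0) :
    (∫ x in K, ∫ s in (f x)..E, s * Real.exp (-s / t)) /
      (∫ x in K, ∫ s in (f x)..E, Real.exp (-s / t)) = E + t := by
  have ht' : t ≠ 0 := ht.ne'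
  have hd : ∀ s : ℝ, HasDerivAt (fun s : ℝ => Real.exp (-s / t)) (Real.exp (-s / t) * (-1 / t)) s := by
    intro s
    exact (((hasDerivAt_id s).neg).div_const t).exp
  have h1 : ∀ a : ℝ, ∫ s in a..E, Real.exp (-s / t)
      = t * (Real.exp (-a / t) - Real.exp (-E / t)) := by
    intro a
    rw [intervalIntegral.integral_eq_sub_of_hasDerivAt
      (f := fun s => -t * Real.exp (-s / t))]
    · ring
    · intro s _
      refine ((hd s).const_mul (-t)).congr_deriv ?_
      field_simp
    · exact (by fun_prop : Continuous fun s : ℝ => Real.exp (-s / t)).intervalIntegrable _ _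
  have h2 : ∀ a : ℝ, ∫ s in a..E, s * Real.exp (-s / t)
      = t * ((a - E) * Real.exp (-a / t))
        + (E + t) * (t * (Real.exp (-a / t) - Real.exp (-E / t))) := by
    intro a
    rw [intervalIntegral.integral_eq_sub_of_hasDerivAt
      (f := fun s => (-t * (s + t)) * Real.exp (-s / t))]
    · ring
    · intro s _
      refine ((((hasDerivAt_id s).add_const t).const_mul (-t)).mul (hd s)).congr_deriv ?_
      simp only [id]
      field_simp
      ring
    · exact (by fun_prop : Continuous fun s : ℝ => s * Real.exp (-s / t)).intervalIntegrable _ _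
  have hint : ∀ g : (Fin n → ℝ) → ℝ, Continuous g → IntegrableOn g K volume :=
    fun g hg => hg.continuousOn.integrableOn_compact hKcomp
  have hZ : 0 < ∫ x in K, Real.exp (-f x / t) := by
    have : NeZero (volume.restrict K) := ⟨by
      rw [Ne, Measure.restrict_eq_zero]; exact hKpos.ne'⟩
    exact integral_exp_pos (hint (fun x => Real.exp (-f x / t)) (by fun_prop))
  have h0 : ∫ x in K, (f x - E) * Real.exp (-f x / t) = 0 := by
    simp only [sub_mul]
    rw [integral_sub (hint (fun x => f x * Real.exp (-f x / t)) (by fun_prop))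
      (hint (fun x => E * Real.exp (-f x / t)) (by fun_prop)), integral_const_mul]
    have hE' : E * (∫ x in K, Real.exp (-f x / t)) = ∫ x in K, f x * Real.exp (-f x / t) := by
      rw [hE, boltzmannExp, div_mul_cancel₀ _ hZ.ne']
    rw [hE', sub_self]
  simp only [h1, h2]
  rw [integral_add (hint (fun x => t * ((f x - E) * Real.exp (-f x / t))) (by fun_prop))
    (hint (fun x => (E + t) * (t * (Real.exp (-f x / t) - Real.exp (-E / t)))) (by fun_prop))]
  simp only [integral_const_mul]
  rw [h0, mul_zero, zero_add]
  exact mul_div_cancel_right₀ _ (mul_ne_zero ht' hne)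
end

section
/- Let f : ℝⁿ → ℝ be a polynomial of degree d ≥ 1, let K ⊆ ℝⁿ be compact with positive Lebesgue measure, assume f(x) ≥ 0 for all x ∈ K, and set f̂_max := max_{x∈K} |f(x)|. Then for every t > 0 and every integer r with r ≥ e·f̂_max/t one has f̲^(rd)_K ≤ E_t[f] + f̂_max/2^r. -/
open MeasureTheory Real

/-- Taylor polynomial of `exp (-s)`. -/
noncomputable def tayNeg (m : ℕ) (s : ℝ) : ℝ := ∑ k ∈ Finset.range (m + 1), (-s) ^ k / (k.factorial : ℝ)

lemma tayNeg_hasDeriv (m : ℕ) (s : ℝ) : HasDerivAt (tayNeg (m + 1)) (-tayNeg m s) s := by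
  have h : ∀ k ∈ Finset.range (m + 1 + 1), HasDerivAt (fun s : ℝ => (-s) ^ k / (k.factorial : ℝ))
      ((k : ℝ) * (-s) ^ (k - 1) * (-1) / (k.factorial : ℝ)) s := by
    intro k _
    exact (((hasDerivAt_id s).neg).pow k).div_const _
  have h2 := HasDerivAt.fun_sum h
  have e : (∑ k ∈ Finset.range (m + 1 + 1), ((k : ℝ) * (-s) ^ (k - 1) * (-1) / (k.factorial : ℝ)))
      = -tayNeg m s := by
    rw [Finset.sum_range_succ', tayNeg, ← Finset.sum_neg_distrib]
    simp only [Nat.cast_zero, zero_mul, zero_div, add_zero]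
    refine Finset.sum_congr rfl fun k _ => ?_
    rw [Nat.factorial_succ]
    have : (k.factorial : ℝ) ≠ 0 := by positivity
    push_cast
    have h3 : (k : ℝ) + 1 ≠ 0 := by positivity
    field_simp
    try simp
  rw [e] at h2
  exact h2

lemma tayNeg_zero (m : ℕ) : tayNeg m 0 = 1 := by
  rw [tayNeg, Finset.sum_range_succ']
  simp

lemma tay_sign (m : ℕ) : ∀ s : ℝ, 0 ≤ s → 0 ≤ (-1) ^ m * (tayNeg m s - Real.exp (-s)) := by
  induction m with
  | zero =>
    intro s hs
    simp [tayNeg, hs]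
  | succ m ih =>
    intro s hs
    have hd : ∀ x : ℝ, HasDerivAt (fun s => (-1 : ℝ) ^ (m + 1) * (tayNeg (m + 1) s - Real.exp (-s)))
        ((-1 : ℝ) ^ (m + 1) * (-tayNeg m x - Real.exp (-x) * (-1))) x := fun x =>
      ((tayNeg_hasDeriv m x).sub ((hasDerivAt_id x).neg.exp)).const_mul _
    have hm : MonotoneOn (fun s => (-1 : ℝ) ^ (m + 1) * (tayNeg (m + 1) s - Real.exp (-s)))
        (Set.Ici 0) := by
      apply monotoneOn_of_deriv_nonneg (convex_Ici 0)
      · exact fun x _ => (hd x).continuousAt.continuousWithinAt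
      · exact fun x _ => (hd x).differentiableAt.differentiableWithinAt
      · intro x hx
        rw [interior_Ici] at hx
        rw [(hd x).deriv]
        have := ih x (le_of_lt hx)
        rw [pow_succ]
        linarith
    have := hm (Set.mem_Ici.2 le_rfl) (Set.mem_Ici.2 hs) hs
    simpa [tayNeg_zero] using this

lemma tay_lower (r : ℕ) (s : ℝ) (hs : 0 ≤ s) : Real.exp (-s) ≤ tayNeg (2 * r) s := by
  have := tay_sign (2 * r) s hs
  rw [pow_mul] at this
  norm_num at this
  linarith

lemma tay_upper (r : ℕ) (s : ℝ) (hs : 0 ≤ s) :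
    tayNeg (2 * r) s ≤ Real.exp (-s) + s ^ (2 * r + 1) / ((2 * r + 1).factorial : ℝ) := by
  have := tay_sign (2 * r + 1) s hs
  rw [tayNeg, Finset.sum_range_succ, ← tayNeg] at this
  rw [pow_succ, pow_mul] at this
  have e : (-s) ^ (2 * r + 1) = - s ^ (2 * r + 1) := Odd.neg_pow ⟨r, rfl⟩ s
  rw [e, neg_div] at this
  norm_num at this
  linarith

lemma tay_upper2 (r : ℕ) (s : ℝ) (hs : 0 ≤ s) (hsr : Real.exp 1 * s ≤ r) :
    tayNeg (2 * r) s ≤ Real.exp (-s) + Real.exp (-s) / 2 ^ r := by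
  refine (tay_upper r s hs).trans ?_
  refine add_le_add le_rfl ?_
  have h1 : s ^ (2 * r + 1) / ((2 * r + 1).factorial : ℝ) ≤ (1 / 2) ^ (2 * r + 1) := by
    have h := Real.pow_div_factorial_le_exp (x := ((2 * r + 1 : ℕ) : ℝ)) (by positivity) (2 * r + 1)
    rw [← mul_one ((2 * r + 1 : ℕ) : ℝ), Real.exp_nat_mul, mul_one, div_le_iff₀ (by positivity)] at h
    rw [div_le_iff₀ (by positivity)]
    have h2 : (Real.exp 1 * s) ^ (2 * r + 1) ≤ ((1 / 2) * ((2 * r + 1 : ℕ) : ℝ)) ^ (2 * r + 1) := by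
      apply pow_le_pow_left₀ (by positivity)
      push_cast; linarith
    rw [mul_pow, mul_pow] at h2
    have h3 : (0 : ℝ) < Real.exp 1 ^ (2 * r + 1) := by positivity
    refine le_of_mul_le_mul_left ?_ h3
    calc _ ≤ _ := h2
      _ ≤ (1 / 2) ^ (2 * r + 1) * (Real.exp 1 ^ (2 * r + 1) * ((2 * r + 1).factorial : ℝ)) := by
        gcongr
      _ = _ := by ring
  have h4 : (1 / 2 : ℝ) ^ r ≤ Real.exp (-s) := by
    have h5 : (1 / 2 : ℝ) ^ r = Real.exp (-(r * Real.log 2)) := by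
      rw [← mul_neg, Real.exp_nat_mul, Real.exp_neg, Real.exp_log (by norm_num)]; norm_num
    rw [h5]
    apply Real.exp_le_exp.2
    have := Real.log_two_gt_d9
    have := Real.exp_one_gt_d9
    have h6 : (0 : ℝ) ≤ r := by positivity
    nlinarith
  refine h1.trans ?_
  calc (1 / 2 : ℝ) ^ (2 * r + 1) = (1 / 2) ^ r * (1 / 2) ^ r * (1 / 2) := by ring
    _ ≤ Real.exp (-s) * (1 / 2) ^ r * 1 := by gcongr; norm_num
    _ = _ := by rw [one_div, inv_pow]; ring

lemma fact_add (i j r : ℕ) (hi : i ≤ r) : (((i + j).factorial : ℕ) : ℝ)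
    = ∑ k ∈ Finset.range (r + 1), ((i.factorial : ℝ) * (i.choose k)) * (j.factorial * (j.choose k)) := by
  have h : (i + j).choose i = ∑ k ∈ Finset.range (r + 1), i.choose k * j.choose k := by
    rw [Nat.add_choose_eq, Finset.Nat.sum_antidiagonal_eq_sum_range_succ
      (fun a b => i.choose a * j.choose b), ← Finset.sum_range_reflect]
    have : Finset.range (i + 1) ⊆ Finset.range (r + 1) := by
      intro a; simp; omega
    rw [← Finset.sum_subset this]
    · refine Finset.sum_congr rfl fun k hk => ?_
      have hk' : k ≤ i := by simp at hk; omega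
      rw [show i + 1 - 1 - k = i - k by omega, Nat.choose_symm hk', show i - (i - k) = k by omega]
    · intro k _ hk
      rw [Nat.choose_eq_zero_of_lt (by simp at hk; omega), zero_mul]
  have h2 := Nat.add_choose_mul_factorial_mul_factorial i j
  rw [← h2, ← Nat.choose_symm_add, h]
  push_cast
  rw [Finset.sum_mul, Finset.sum_mul]
  refine Finset.sum_congr rfl fun k _ => ?_
  ring

lemma sos_identity (r : ℕ) (x : ℝ) :
    ∑ k ∈ Finset.range (r + 1),
      (∑ i ∈ Finset.range (r + 1), ((r.choose i : ℝ) * (i.factorial * i.choose k)) * x ^ (r - i)) ^ 2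
    = ((2 * r).factorial : ℝ) * ∑ k ∈ Finset.range (2 * r + 1), x ^ k / (k.factorial : ℝ) := by
  have h1 : ∑ k ∈ Finset.range (r + 1),
      (∑ i ∈ Finset.range (r + 1), ((r.choose i : ℝ) * (i.factorial * i.choose k)) * x ^ (r - i)) ^ 2
      = ∑ q ∈ Finset.range (r + 1) ×ˢ Finset.range (r + 1),
        ((r.choose q.1 : ℝ) * r.choose q.2) * ((q.1 + q.2).factorial : ℝ) * x ^ (2 * r - (q.1 + q.2)) := by
    simp_rw [sq, Finset.sum_mul_sum]
    rw [Finset.sum_congr rfl (fun k _ => (Finset.sum_product' _ _ _).symm), Finset.sum_comm]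
    refine Finset.sum_congr rfl fun q hq => ?_
    simp at hq
    rw [fact_add q.1 q.2 r (by omega), Finset.mul_sum, Finset.sum_mul]
    refine Finset.sum_congr rfl fun k _ => ?_
    rw [show 2 * r - (q.1 + q.2) = (r - q.1) + (r - q.2) by omega, pow_add]
    ring
  rw [h1, ← Finset.sum_fiberwise_of_maps_to (t := Finset.range (2 * r + 1)) (g := fun q => q.1 + q.2)
    (by intro q hq; simp at hq ⊢; omega), ← Finset.sum_range_reflect, Finset.mul_sum]
  refine Finset.sum_congr rfl fun m hm => ?_
  have hm' : m ≤ 2 * r := by simp at hm; omega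
  rw [show 2 * r + 1 - 1 - m = 2 * r - m by omega]
  have h2 : ((2 * r).choose (2 * r - m) : ℝ) = ∑ q ∈ (Finset.range (r + 1) ×ˢ Finset.range (r + 1)).filter
      (fun q => q.1 + q.2 = 2 * r - m), ((r.choose q.1 : ℝ) * r.choose q.2) := by
    rw [two_mul r, Nat.add_choose_eq]
    push_cast
    symm
    apply Finset.sum_subset
    · intro q hq
      simp at hq ⊢
      omega
    · intro q hq hq2
      simp at hq hq2
      by_cases h : q.1 ≤ r
      · rw [Nat.choose_eq_zero_of_lt (n := r) (k := q.2) (by by_contra h'; exact hq2 (by omega) (by omega) (by omega))]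
        simp
      · rw [Nat.choose_eq_zero_of_lt (n := r) (k := q.1) (by omega)]
        simp
  have h3 := Nat.choose_mul_factorial_mul_factorial (n := 2 * r) (k := 2 * r - m) (by omega)
  rw [show 2 * r - (2 * r - m) = m by omega] at h3
  rw [← h3]
  push_cast
  rw [h2]
  have : (m.factorial : ℝ) ≠ 0 := by positivity
  rw [mul_assoc, Finset.sum_mul]
  rw [Finset.sum_mul]
  refine Finset.sum_congr rfl fun q hq => ?_
  simp only [Finset.mem_filter] at hq
  rw [hq.2, show 2 * r - (2 * r - m) = m by omega]
  field_simp

/-- The square roots in the decomposition of the Taylor polynomial of `p`. -/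
noncomputable def sosPoly (n : ℕ) (p : MvPolynomial (Fin n) ℝ) (r : ℕ) (t c : ℝ) (k : ℕ) :
    MvPolynomial (Fin n) ℝ :=
  ∑ i ∈ Finset.range (r + 1),
    MvPolynomial.C (c * (((r.choose i : ℝ) * (i.factorial * i.choose k)) * (-t⁻¹) ^ (r - i))) * p ^ (r - i)

lemma sosPoly_deg (n : ℕ) (p : MvPolynomial (Fin n) ℝ) (r : ℕ) (t c : ℝ) (k : ℕ) :
    (sosPoly n p r t c k).totalDegree ≤ r * p.totalDegree := by
  apply MvPolynomial.totalDegree_finsetSum_le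
  intro i _
  refine (MvPolynomial.totalDegree_mul _ _).trans ?_
  rw [MvPolynomial.totalDegree_C, zero_add]
  refine (MvPolynomial.totalDegree_pow _ _).trans ?_
  gcongr
  omega

lemma sosPoly_eval (n : ℕ) (p : MvPolynomial (Fin n) ℝ) (r : ℕ) (t c : ℝ) (x : Fin n → ℝ) :
    MvPolynomial.eval x (∑ k : Fin (r + 1), sosPoly n p r t c k ^ 2)
      = c ^ 2 * (((2 * r).factorial : ℝ) * tayNeg (2 * r) (MvPolynomial.eval x p / t)) := by
  rw [tayNeg, ← sos_identity, Finset.sum_range, map_sum, Finset.mul_sum]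
  refine Finset.sum_congr rfl fun k _ => ?_
  rw [map_pow, ← mul_pow]
  congr 1
  rw [sosPoly, map_sum, Finset.mul_sum]
  refine Finset.sum_congr rfl fun i _ => ?_
  rw [map_mul, map_pow, MvPolynomial.eval_C, show -(MvPolynomial.eval x p / t)
    = (-t⁻¹) * MvPolynomial.eval x p by ring, mul_pow]
  ring

theorem stmt4 (n : ℕ) (p : MvPolynomial (Fin n) ℝ) (d : ℕ) (hd : 1 ≤ d)
    (hdeg : p.totalDegree = d)
    (f : (Fin n → ℝ) → ℝ) (hf : f = fun x => MvPolynomial.eval x p)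
    (K : Set (Fin n → ℝ)) (hKcomp : IsCompact K) (hKpos : 0 < volume K)
    (hfnn : ∀ x ∈ K, 0 ≤ f x)
    (fmax : ℝ) (hfmax : fmax = sSup ((fun x => |f x|) '' K))
    (t : ℝ) (ht : 0 < t) (r : ℕ) (hr : Real.exp 1 * fmax / t ≤ r) :
    lasserreBound n f K (r * d) ≤ boltzmannExp n f K t + fmax / 2 ^ r := by
  have hfc : Continuous f := by rw [hf]; exact MvPolynomial.continuous_eval p
  have hle : ∀ x ∈ K, f x ≤ fmax := by
    intro x hx
    rw [hfmax]
    exact (le_abs_self _).trans (le_csSup (hKcomp.image hfc.abs).bddAbove ⟨x, hx, rfl⟩)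
  have hKm : MeasurableSet K := hKcomp.measurableSet
  have hTc : Continuous (fun x => tayNeg (2 * r) (f x / t)) := by
    unfold tayNeg; fun_prop
  have hEc : Continuous (fun x => Real.exp (-f x / t)) := by fun_prop
  have hintg : ∀ g : (Fin n → ℝ) → ℝ, Continuous g → IntegrableOn g K := fun g hg =>
    hg.continuousOn.integrableOn_compact hKcomp
  have hexp : ∀ x, Real.exp (-f x / t) = Real.exp (-(f x / t)) := fun x => by rw [neg_div]
  have hlow : ∀ x ∈ K, Real.exp (-f x / t) ≤ tayNeg (2 * r) (f x / t) := fun x hx => by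
    rw [hexp]; exact tay_lower r _ (div_nonneg (hfnn x hx) ht.le)
  have hup : ∀ x ∈ K, tayNeg (2 * r) (f x / t)
      ≤ Real.exp (-f x / t) + Real.exp (-f x / t) / 2 ^ r := fun x hx => by
    rw [hexp]
    refine tay_upper2 r _ (div_nonneg (hfnn x hx) ht.le) (le_trans ?_ hr)
    rw [mul_div_assoc]
    have := hle x hx
    gcongr
  set A := ∫ x in K, tayNeg (2 * r) (f x / t) with hA
  set B := ∫ x in K, Real.exp (-f x / t) with hB
  have hBpos : 0 < B := by
    have : NeZero (volume.restrict K) := ⟨by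
      rw [Ne, Measure.restrict_eq_zero]; exact hKpos.ne'⟩
    exact integral_exp_pos (hintg _ hEc)
  have hBA : B ≤ A := setIntegral_mono_on (hintg _ hEc) (hintg _ hTc) hKm hlow
  have hApos : 0 < A := hBpos.trans_le hBA
  have hfac : (0 : ℝ) < ((2 * r).factorial : ℝ) := by positivity
  obtain ⟨c, hc⟩ : ∃ c : ℝ, c ^ 2 * ((2 * r).factorial : ℝ) = A⁻¹ :=
    ⟨√(A⁻¹ / ((2 * r).factorial : ℝ)), by
      rw [Real.sq_sqrt (by positivity)]; field_simp⟩
  have hev : ∀ x, MvPolynomial.eval x (∑ k : Fin (r + 1), sosPoly n p r t c k ^ 2)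
      = A⁻¹ * tayNeg (2 * r) (f x / t) := fun x => by
    rw [sosPoly_eval, ← mul_assoc, hc, hf]
  have hmem : lasserreBound n f K (r * d) ≤ ∫ x in K, A⁻¹ * tayNeg (2 * r) (f x / t) * f x := by
    apply csInf_le
    · refine ⟨0, ?_⟩
      rintro y ⟨m, q, -, -, rfl⟩
      refine setIntegral_nonneg hKm fun x hx => mul_nonneg ?_ (hfnn x hx)
      rw [map_sum]
      refine Finset.sum_nonneg fun i _ => ?_
      rw [map_pow]
      positivity
    · refine ⟨r + 1, fun k => sosPoly n p r t c k, fun k => ?_, ?_, ?_⟩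
      · rw [← hdeg]; exact sosPoly_deg ..
      · simp_rw [hev]
        rw [integral_const_mul, ← hA, inv_mul_cancel₀ hApos.ne']
      · simp_rw [hev]
  refine hmem.trans ?_
  have hfm : 0 ≤ fmax := by
    obtain ⟨x, hx⟩ : K.Nonempty := by
      by_contra h
      rw [Set.not_nonempty_iff_eq_empty] at h
      simp [h] at hKpos
    exact (hfnn x hx).trans (hle x hx)
  have hmain : ∫ x in K, tayNeg (2 * r) (f x / t) * f x
      ≤ (∫ x in K, f x * Real.exp (-f x / t)) + fmax / 2 ^ r * B := by
    rw [hB, ← integral_const_mul, ← integral_add (hintg _ (by fun_prop)) (hintg _ (by fun_prop))]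
    refine setIntegral_mono_on (hintg _ (hTc.mul hfc)) (hintg _ (by fun_prop)) hKm fun x hx => ?_
    calc _ ≤ (Real.exp (-f x / t) + Real.exp (-f x / t) / 2 ^ r) * f x :=
          mul_le_mul_of_nonneg_right (hup x hx) (hfnn x hx)
      _ = f x * Real.exp (-f x / t) + f x / 2 ^ r * Real.exp (-f x / t) := by ring
      _ ≤ _ := by
        have := hle x hx
        gcongr
  have hC : 0 ≤ ∫ x in K, f x * Real.exp (-f x / t) :=
    setIntegral_nonneg hKm fun x hx => mul_nonneg (hfnn x hx) (Real.exp_nonneg _)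
  simp_rw [mul_assoc]
  rw [integral_const_mul, boltzmannExp, ← hB, inv_mul_eq_div]
  calc _ ≤ ((∫ x in K, f x * Real.exp (-f x / t)) + fmax / 2 ^ r * B) / A := by gcongr
    _ ≤ ((∫ x in K, f x * Real.exp (-f x / t)) + fmax / 2 ^ r * B) / B := by gcongr
    _ = _ := by field_simp
end

section
/- Let f : ℝⁿ → ℝ be a convex polynomial of degree d ≥ 1 and let K ⊆ ℝⁿ be a convex body. Then there is a constant c > 0 not depending on r (for instance c = (n·e + 1)·f̂_max works when f is nonnegative on K) such that for every integer r ≥ 1, f̲^(rd)_K − min_{x∈K} f(x) ≤ c/r. -/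
open MeasureTheory Real

lemma aux_key (n : ℕ) (u : (Fin n → ℝ) → ℝ) (hu : Continuous u)
    (K : Set (Fin n → ℝ)) (hK : IsCompact K) (hKc : Convex ℝ K)
    (hu0 : ∀ x ∈ K, 0 ≤ u x) (hu1 : ∀ x ∈ K, u x ≤ 1)
    (x0 : Fin n → ℝ) (hx0 : x0 ∈ K)
    (hhalf : ∀ x ∈ K, u ((2:ℝ)⁻¹ • x + (2:ℝ)⁻¹ • x0) ≤ u x / 2) (N : ℕ) :
    N * ∫ x in K, (1 - u x) ^ N * u x ≤ 2 * 2 ^ n * ∫ x in K, (1 - u x) ^ N := by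
  have hm : MeasurableSet K := hK.measurableSet
  have hA : IntegrableOn (fun x => (1 - u x) ^ N) K :=
    (by fun_prop : Continuous (fun x => (1 - u x) ^ N)).continuousOn.integrableOn_compact hK
  have hB : IntegrableOn (fun x => (1 - u x) ^ N * u x) K :=
    (by fun_prop : Continuous (fun x => (1 - u x) ^ N * u x)).continuousOn.integrableOn_compact hK
  have hC : IntegrableOn (fun x => (1 - u x / 2) ^ N) K :=
    (by fun_prop : Continuous (fun x => (1 - u x / 2) ^ N)).continuousOn.integrableOn_compact hK
  have hG : Integrable (K.indicator (fun x => (1 - u x) ^ N)) := (integrable_indicator_iff hm).2 hA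
  set G := K.indicator (fun x => (1 - u x) ^ N) with hGdef
  have hG1 : Integrable (fun x => G (x + (2:ℝ)⁻¹ • x0)) := hG.comp_add_right _
  have hG2 : Integrable (fun x => G ((2:ℝ)⁻¹ • x + (2:ℝ)⁻¹ • x0)) :=
    hG1.comp_smul (R := (2:ℝ)⁻¹) (by norm_num)
  have hint : ∫ x, G ((2:ℝ)⁻¹ • x + (2:ℝ)⁻¹ • x0) = 2 ^ n * ∫ x in K, (1 - u x) ^ N := by
    have := Measure.integral_comp_smul (volume : Measure (Fin n → ℝ))
      (fun x => G (x + (2:ℝ)⁻¹ • x0)) (2:ℝ)⁻¹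
    rw [this, integral_add_right_eq_self, hGdef, integral_indicator hm]
    simp
  have hle : ∫ x in K, (1 - u x / 2) ^ N ≤ 2 ^ n * ∫ x in K, (1 - u x) ^ N := by
    rw [← hint, ← integral_indicator hm]
    refine integral_mono ((integrable_indicator_iff hm).2 hC) hG2 fun x => ?_
    by_cases hx : x ∈ K
    · have hmem : (2:ℝ)⁻¹ • x + (2:ℝ)⁻¹ • x0 ∈ K :=
        hKc hx hx0 (by norm_num) (by norm_num) (by norm_num)
      simp only [hGdef, Set.indicator_of_mem hx, Set.indicator_of_mem hmem]
      have := hhalf x hx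
      have := hu1 x hx
      gcongr
      linarith
    · simp only [Set.indicator_of_notMem hx, hGdef]
      refine Set.indicator_nonneg (fun y hy => ?_) _
      have := hu1 y hy
      exact pow_nonneg (by linarith) _
  have hbern : (∫ x in K, (1 - u x) ^ N * u x) * (N / 2) ≤ ∫ x in K, (1 - u x / 2) ^ N := by
    rw [← integral_mul_const]
    refine setIntegral_mono_on (hB.mul_const _) hC hm fun x hx => ?_
    have h0 := hu0 x hx
    have h1 := hu1 x hx
    have ha : 0 ≤ 1 - u x := by linarith
    have hb : (1 - u x) * (1 + u x / 2) ≤ 1 - u x / 2 := by nlinarith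
    calc (1 - u x) ^ N * u x * (N / 2) ≤ (1 - u x) ^ N * (1 + N * (u x / 2)) := by
          have := pow_nonneg ha N
          nlinarith
      _ ≤ (1 - u x) ^ N * (1 + u x / 2) ^ N := by
          have := one_add_mul_le_pow (a := u x / 2) (by linarith) N
          gcongr
      _ = ((1 - u x) * (1 + u x / 2)) ^ N := (mul_pow _ _ _).symm
      _ ≤ _ := by gcongr
  nlinarith

theorem stmt5 (n : ℕ) (p : MvPolynomial (Fin n) ℝ) (d : ℕ) (hd : 1 ≤ d)
    (hdeg : p.totalDegree = d)
    (f : (Fin n → ℝ) → ℝ) (hf : f = fun x => MvPolynomial.eval x p)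
    (hfconv : ConvexOn ℝ Set.univ f)
    (K : Set (Fin n → ℝ)) (hKcomp : IsCompact K) (hKconv : Convex ℝ K)
    (hKint : (interior K).Nonempty) :
    ∃ c : ℝ, 0 < c ∧ ∀ r : ℕ, 1 ≤ r →
      lasserreBound n f K (r * d) - sInf (f '' K) ≤ c / r := by
  have hm : MeasurableSet K := hKcomp.measurableSet
  have hfc : Continuous f := by rw [hf]; exact MvPolynomial.continuous_eval p
  have hne : K.Nonempty := hKint.mono interior_subset
  obtain ⟨x0, hx0, hmin⟩ := hKcomp.exists_isMinOn hne hfc.continuousOn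
  obtain ⟨x1, hx1, hmax⟩ := hKcomp.exists_isMaxOn hne hfc.continuousOn
  have hmin' : ∀ x ∈ K, f x0 ≤ f x := fun x hx => hmin hx
  have hmax' : ∀ x ∈ K, f x ≤ f x1 := fun x hx => hmax hx
  have hsInf : sInf (f '' K) = f x0 := by
    apply IsLeast.csInf_eq
    exact ⟨⟨x0, hx0, rfl⟩, by rintro _ ⟨x, hx, rfl⟩; exact hmin' x hx⟩
  set M : ℝ := f x1 - f x0 + 1 with hM
  have hMpos : 0 < M := by have := hmin' x1 hx1; linarith
  refine ⟨M * 2 ^ n, by positivity, fun r hr => ?_⟩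
  have hr' : (0:ℝ) < r := by exact_mod_cast hr
  set u : (Fin n → ℝ) → ℝ := fun x => M⁻¹ * (f x - f x0) with hu
  have huc : Continuous u := by fun_prop
  have hu0 : ∀ x ∈ K, 0 ≤ u x := fun x hx =>
    mul_nonneg (by positivity) (by linarith [hmin' x hx])
  have hu1 : ∀ x ∈ K, u x < 1 := fun x hx => by
    rw [hu]; dsimp only
    rw [inv_mul_lt_iff₀ hMpos]
    linarith [hmax' x hx]
  have hhalf : ∀ x ∈ K, u ((2:ℝ)⁻¹ • x + (2:ℝ)⁻¹ • x0) ≤ u x / 2 := fun x hx => by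
    have h := hfconv.2 (Set.mem_univ x) (Set.mem_univ x0)
      (by norm_num : (0:ℝ) ≤ 2⁻¹) (by norm_num : (0:ℝ) ≤ 2⁻¹) (by norm_num)
    simp only [smul_eq_mul] at h
    have hMi : 0 < M⁻¹ := by positivity
    simp only [hu]
    nlinarith
  have key := aux_key n u huc K hKcomp hKconv hu0 (fun x hx => (hu1 x hx).le) x0 hx0 hhalf (2 * r)
  set A := ∫ x in K, (1 - u x) ^ (2 * r) with hAdef
  have hAc : Continuous (fun x => (1 - u x) ^ (2 * r)) := by fun_prop
  have hAi : IntegrableOn (fun x => (1 - u x) ^ (2 * r)) K :=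
    hAc.continuousOn.integrableOn_compact hKcomp
  have hBi : IntegrableOn (fun x => (1 - u x) ^ (2 * r) * u x) K :=
    (hAc.mul huc).continuousOn.integrableOn_compact hKcomp
  have hApos : 0 < A := by
    rw [hAdef, setIntegral_pos_iff_support_of_nonneg_ae _ hAi]
    · have hs : K ⊆ Function.support (fun x => (1 - u x) ^ (2 * r)) ∩ K := fun x hx =>
        ⟨(pow_pos (by linarith [hu1 x hx]) _).ne', hx⟩
      exact lt_of_lt_of_le (isOpen_interior.measure_pos volume hKint)
        (measure_mono (interior_subset.trans hs))
    · filter_upwards [ae_restrict_mem hm] with x hx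
      exact (pow_pos (by linarith [hu1 x hx]) _).le
  -- the density
  set q : MvPolynomial (Fin n) ℝ :=
    MvPolynomial.C (√A)⁻¹ *
      (MvPolynomial.C (1 + M⁻¹ * f x0) - MvPolynomial.C M⁻¹ * p) ^ r with hq
  have hqdeg : q.totalDegree ≤ r * d := by
    refine (MvPolynomial.totalDegree_mul _ _).trans ?_
    rw [MvPolynomial.totalDegree_C, zero_add]
    refine (MvPolynomial.totalDegree_pow _ _).trans (Nat.mul_le_mul_left _ ?_)
    refine (MvPolynomial.totalDegree_sub _ _).trans ?_
    refine max_le (by rw [MvPolynomial.totalDegree_C]; exact Nat.zero_le _) ((MvPolynomial.totalDegree_mul _ _).trans ?_)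
    simp [hdeg]
  have hqe : ∀ x, MvPolynomial.eval x (∑ i : Fin 1, (fun _ => q) i ^ 2)
      = A⁻¹ * (1 - u x) ^ (2 * r) := fun x => by
    have h1 : 1 + M⁻¹ * f x0 - M⁻¹ * f x = 1 - u x := by simp only [hu]; ring
    have h2 : MvPolynomial.eval x p = f x := by rw [hf]
    simp only [Finset.univ_unique, Finset.sum_const, Finset.card_singleton, one_smul, hq, map_pow,
      map_mul, map_sub, MvPolynomial.eval_C, h2, h1]
    rw [mul_pow, inv_pow, Real.sq_sqrt hApos.le, ← pow_mul, mul_comm r 2]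
  have hbdd : lasserreBound n f K (r * d) ≤ ∫ x in K, A⁻¹ * (1 - u x) ^ (2 * r) * f x := by
    apply csInf_le
    · refine ⟨f x0, ?_⟩
      rintro y ⟨m, s, -, hs1, rfl⟩
      have hc : Continuous (fun x => MvPolynomial.eval x (∑ i, s i ^ 2)) :=
        MvPolynomial.continuous_eval _
      have hcalc : f x0 = ∫ x in K, MvPolynomial.eval x (∑ i, s i ^ 2) * f x0 := by
        rw [integral_mul_const, hs1, one_mul]
      rw [hcalc]
      refine setIntegral_mono_on ((hc.mul continuous_const).continuousOn.integrableOn_compact hKcomp)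
        ((hc.mul hfc).continuousOn.integrableOn_compact hKcomp) hm fun x hx => ?_
      refine mul_le_mul_of_nonneg_left (hmin' x hx) ?_
      rw [map_sum]
      exact Finset.sum_nonneg fun i _ => by rw [map_pow]; positivity
    · refine ⟨1, fun _ => q, fun _ => hqdeg, ?_, ?_⟩
      · simp_rw [hqe]
        rw [integral_const_mul, ← hAdef, inv_mul_cancel₀ hApos.ne']
      · simp_rw [hqe]
  have hval : ∫ x in K, A⁻¹ * (1 - u x) ^ (2 * r) * f x
      = f x0 + M * (A⁻¹ * ∫ x in K, (1 - u x) ^ (2 * r) * u x) := by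
    have : ∀ x, A⁻¹ * (1 - u x) ^ (2 * r) * f x = A⁻¹ * f x0 * (1 - u x) ^ (2 * r)
        + M * A⁻¹ * ((1 - u x) ^ (2 * r) * u x) := fun x => by
      have : f x = f x0 + M * u x := by simp only [hu]; field_simp; ring
      rw [this]; ring
    simp_rw [this]
    rw [integral_add (hAi.const_mul _) (hBi.const_mul _), integral_const_mul, integral_const_mul,
      ← hAdef]
    field_simp
  rw [hsInf]
  set B := ∫ x in K, (1 - u x) ^ (2 * r) * u x
  have hBA : A⁻¹ * B ≤ 2 ^ n / r := by
    rw [inv_mul_le_iff₀ hApos, ← mul_div_assoc, le_div_iff₀ hr']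
    push_cast at key
    linarith
  have := mul_le_mul_of_nonneg_left hBA hMpos.le
  rw [← mul_div_assoc] at this
  linarith
end

section
/- Let f : ℝⁿ → ℝ be a polynomial (not necessarily convex) and let K ⊆ ℝⁿ be a convex body. Then there is a constant c > 0 depending only on f and K such that for every integer r ≥ 1, f̲^(2r)_K − min_{x∈K} f(x) ≤ c/r. -/
open MeasureTheory Real

lemma aux_Q (n : ℕ) (g : MvPolynomial (Fin n) ℝ) (hg : g.totalDegree ≤ 2) (k : ℕ) :
    ∃ Q : MvPolynomial (Fin n) ℝ, Q.totalDegree ≤ 2 * k ∧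
      (∀ x φ, MvPolynomial.eval x g = sin φ ^ 2 →
        sin φ * MvPolynomial.eval x Q = sin ((2 * k + 1 : ℝ) * φ)) ∧
      (∀ x, MvPolynomial.eval x g = 0 → MvPolynomial.eval x Q = 2 * k + 1) := by
  induction k using Nat.twoStepInduction with
  | zero => exact ⟨1, by simp, by simp, by simp⟩
  | one =>
    refine ⟨MvPolynomial.C 3 - MvPolynomial.C 4 * g, ?_, ?_, ?_⟩
    · refine (MvPolynomial.totalDegree_sub _ _).trans (max_le (by simp) ?_)
      refine (MvPolynomial.totalDegree_mul _ _).trans ?_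
      simp; exact hg
    · intro x φ h
      have : sin ((2 * (1:ℕ) + 1 : ℝ) * φ) = sin (3 * φ) := by norm_num
      rw [this, sin_three_mul]
      simp [h]; ring
    · intro x h
      simp [h]; norm_num
  | more k ih0 ih1 =>
    obtain ⟨P, hP, hP1, hP2⟩ := ih0
    obtain ⟨R, hR, hR1, hR2⟩ := ih1
    refine ⟨(MvPolynomial.C 2 - MvPolynomial.C 4 * g) * R - P, ?_, ?_, ?_⟩
    · refine (MvPolynomial.totalDegree_sub _ _).trans (max_le ?_ (by omega))
      refine (MvPolynomial.totalDegree_mul _ _).trans ?_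
      have : (MvPolynomial.C 2 - MvPolynomial.C 4 * g : MvPolynomial (Fin n) ℝ).totalDegree ≤ 2 := by
        refine (MvPolynomial.totalDegree_sub _ _).trans (max_le (by simp) ?_)
        refine (MvPolynomial.totalDegree_mul _ _).trans ?_
        simp; exact hg
      omega
    · intro x φ h
      have e1 := hP1 x φ h
      have e2 := hR1 x φ h
      have e3 : sin ((2 * (k+2:ℕ) + 1 : ℝ) * φ) + sin ((2 * (k:ℕ) + 1 : ℝ) * φ)
          = 2 * sin ((2 * (k+1:ℕ) + 1 : ℝ) * φ) * (1 - 2 * sin φ ^ 2) := by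
        have a1 : (2 * (k+2:ℕ) + 1 : ℝ) * φ = (2 * (k+1:ℕ) + 1 : ℝ) * φ + 2 * φ := by
          push_cast; ring
        have a2 : (2 * (k:ℕ) + 1 : ℝ) * φ = (2 * (k+1:ℕ) + 1 : ℝ) * φ - 2 * φ := by
          push_cast; ring
        rw [a1, a2, sin_add, sin_sub, cos_two_mul, cos_sq']
        ring
      rw [← e1, ← e2] at e3
      simp only [map_sub, map_mul, MvPolynomial.eval_C, h]
      linear_combination -e3
    · intro x h
      simp only [map_sub, map_mul, MvPolynomial.eval_C, h, hP2 x h, hR2 x h]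
      push_cast; ring

lemma aux_sin (N : ℕ) (φ : ℝ) : |sin (N * φ)| ≤ N * |sin φ| := by
  induction N with
  | zero => simp
  | succ N ih =>
    push_cast
    rw [add_mul, one_mul, sin_add]
    calc _ ≤ |sin (N * φ)| * |cos φ| + |cos (N*φ)| * |sin φ| := by
            rw [← abs_mul, ← abs_mul]; exact abs_add_le _ _
      _ ≤ |sin (N * φ)| * 1 + 1 * |sin φ| := by
            gcongr
            · exact abs_cos_le_one _
            · exact abs_cos_le_one _
      _ ≤ _ := by linarith

/-- needle polynomial bounds -/
lemma aux_needle (n : ℕ) (g : MvPolynomial (Fin n) ℝ) (hg : g.totalDegree ≤ 2) (k : ℕ) :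
    ∃ Q : MvPolynomial (Fin n) ℝ, Q.totalDegree ≤ 2 * k ∧
      ∀ x s, 0 ≤ s → s ≤ 1 → MvPolynomial.eval x g = s ^ 2 →
        |MvPolynomial.eval x Q| ≤ 1 ∧ |MvPolynomial.eval x Q| * ((2 * k + 1) * s) ≤ 1 ∧
        ((2 * k + 1) * s ≤ 1 → 2 / π ≤ MvPolynomial.eval x Q) := by
  obtain ⟨Q, h0, h1, h2⟩ := aux_Q n g hg k
  have hN : (0:ℝ) < 2 * k + 1 := by positivity
  refine ⟨MvPolynomial.C (1 / (2 * k + 1 : ℝ)) * Q, ?_, ?_⟩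
  · refine (MvPolynomial.totalDegree_mul _ _).trans ?_
    simpa using h0
  intro x s hs0 hs1 hgs
  simp only [map_mul, MvPolynomial.eval_C]
  rcases hs0.eq_or_lt with rfl | hs
  · rw [h2 x (by simpa using hgs), one_div_mul_cancel hN.ne']
    simp
    rw [div_le_one pi_pos]
    linarith [pi_gt_three]
  have hsin : sin (arcsin s) = s := sin_arcsin (by linarith) hs1
  have hφ0 : 0 ≤ arcsin s := arcsin_nonneg.2 hs0
  have hφ1 : arcsin s ≤ π / 2 := arcsin_le_pi_div_two s
  have hj := mul_le_sin hφ0 hφ1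
  have e := h1 x (arcsin s) (by rw [hsin]; exact hgs)
  have hab := aux_sin (2 * k + 1) (arcsin s)
  push_cast at hab
  have hab1 := abs_sin_le_one ((2 * k + 1 : ℝ) * arcsin s)
  have hlow : (2 * k + 1 : ℝ) * s ≤ 1 → 2 / π * ((2 * k + 1 : ℝ) * s) ≤ sin ((2 * k + 1 : ℝ) * arcsin s) := by
    intro h
    have h3 : 2 / π * ((2 * k + 1 : ℝ) * arcsin s) ≤ 1 := by
      calc _ = (2 * k + 1 : ℝ) * (2 / π * arcsin s) := by ring
        _ ≤ (2 * k + 1 : ℝ) * s := by rw [hsin] at hj; gcongr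
        _ ≤ 1 := h
    have h4 : (2 * k + 1 : ℝ) * arcsin s ≤ π / 2 := by
      rw [div_mul_eq_mul_div, div_le_one pi_pos] at h3
      linarith
    have h5 := mul_le_sin (by positivity) h4
    refine le_trans ?_ h5
    gcongr
    have := sin_le hφ0
    rwa [hsin] at this
  rw [hsin] at e hab
  rw [← e] at hab hab1 hlow
  rw [abs_mul, abs_of_pos hs] at hab hab1
  generalize MvPolynomial.eval x Q = v at *
  have hv : |1 / (2 * k + 1 : ℝ) * v| = |v| / (2 * k + 1) := by
    rw [abs_mul, abs_of_pos (by positivity)]; ring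
  rw [hv]
  refine ⟨?_, ?_, ?_⟩
  · rw [div_le_one hN]
    exact le_of_mul_le_mul_left (by linarith) hs
  · have : |v| / (2 * k + 1 : ℝ) * ((2 * k + 1) * s) = s * |v| := by field_simp
    rw [this]; exact hab1
  · intro h
    have h6 := hlow h
    have : 2 / π * (2 * k + 1 : ℝ) ≤ v := le_of_mul_le_mul_left (by linarith) hs
    rw [one_div_mul_eq_div, le_div_iff₀ hN]; exact this

lemma aux_integrableOn {n : ℕ} {K : Set (Fin n → ℝ)} (hK : IsCompact K) {F : (Fin n → ℝ) → ℝ}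
    (hF : Continuous F) : IntegrableOn F K := hF.continuousOn.integrableOn_compact hK

lemma aux_cont {n : ℕ} (Q : MvPolynomial (Fin n) ℝ) :
    Continuous fun x => MvPolynomial.eval x Q := MvPolynomial.continuous_eval Q

/-- any feasible density gives an upper bound -/
lemma aux_upper (n : ℕ) (f : (Fin n → ℝ) → ℝ) (hf : Continuous f)
    (K : Set (Fin n → ℝ)) (hK : IsCompact K) (x0 : Fin n → ℝ) (hmin : ∀ x ∈ K, f x0 ≤ f x)
    (r : ℕ) (q : MvPolynomial (Fin n) ℝ) (hq : q.totalDegree ≤ r)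
    (hA : 0 < ∫ x in K, MvPolynomial.eval x q ^ 2) :
    lasserreBound n f K r - f x0 ≤
      (∫ x in K, MvPolynomial.eval x q ^ 2 * (f x - f x0)) /
        (∫ x in K, MvPolynomial.eval x q ^ 2) := by
  set A := ∫ x in K, MvPolynomial.eval x q ^ 2 with hAdef
  have hle : lasserreBound n f K r ≤ (∫ x in K, MvPolynomial.eval x q ^ 2 * f x) / A := by
    apply csInf_le
    · refine ⟨f x0, ?_⟩
      rintro y ⟨m, p, -, h1, rfl⟩
      calc f x0 = (∫ x in K, MvPolynomial.eval x (∑ i, p i ^ 2)) * f x0 := by rw [h1, one_mul]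
        _ = ∫ x in K, MvPolynomial.eval x (∑ i, p i ^ 2) * f x0 := (integral_mul_const _ _).symm
        _ ≤ _ := by
          apply setIntegral_mono_on
          · exact aux_integrableOn hK ((aux_cont _).mul continuous_const)
          · exact aux_integrableOn hK ((aux_cont _).mul hf)
          · exact hK.measurableSet
          · intro x hx
            apply mul_le_mul_of_nonneg_left (hmin x hx)
            simp only [map_sum, map_pow]
            positivity
    · have key : ∀ x, MvPolynomial.eval x (∑ i : Fin 1, (fun _ : Fin 1 => MvPolynomial.C (1 / √A) * q) i ^ 2)
          = A⁻¹ * MvPolynomial.eval x q ^ 2 := by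
        intro x
        simp [mul_pow, Real.sq_sqrt hA.le]
      refine ⟨1, fun _ => MvPolynomial.C (1 / √A) * q, ?_, ?_, ?_⟩
      · intro _
        refine (MvPolynomial.totalDegree_mul _ _).trans ?_
        simpa using hq
      · simp_rw [key]
        rw [integral_const_mul, ← hAdef, inv_mul_cancel₀ hA.ne']
      · simp_rw [key, mul_assoc]
        rw [integral_const_mul]
        ring
  have e : (∫ x in K, MvPolynomial.eval x q ^ 2 * (f x - f x0))
      = (∫ x in K, MvPolynomial.eval x q ^ 2 * f x) - A * f x0 := by
    simp_rw [mul_sub]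
    rw [integral_sub, integral_mul_const]
    · exact aux_integrableOn hK (((aux_cont _).pow 2).mul hf)
    · exact aux_integrableOn hK (((aux_cont _).pow 2).mul continuous_const)
  rw [e, sub_div, mul_div_cancel_left₀ _ hA.ne']
  linarith

lemma aux_point (n : ℕ) (a z D : ℝ) (ha : |a| ≤ 1) (hz : 0 ≤ z) (haz : |a| * z ≤ D) :
    (a ^ (n + 1)) ^ 2 * z ≤ (1 + D) ^ (2 * n + 2) * (1 + z) ^ (-(2 * n + 1 : ℝ)) := by
  have h1 : (1 + z) ^ (-(2 * n + 1 : ℝ)) = ((1 + z) ^ (2 * n + 1))⁻¹ := by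
    rw [rpow_neg (by positivity)]
    congr 1
    exact_mod_cast rpow_natCast (1 + z) (2 * n + 1)
  rw [h1, ← div_eq_mul_inv, le_div_iff₀ (by positivity)]
  have h2 : (a ^ (n + 1)) ^ 2 = |a| ^ (2 * n + 2) := by
    rw [← pow_mul, show (n + 1) * 2 = 2 * (n + 1) by ring, show 2 * n + 2 = 2 * (n + 1) by ring,
      pow_mul, pow_mul, sq_abs]
  rw [h2]
  calc |a| ^ (2 * n + 2) * z * (1 + z) ^ (2 * n + 1)
      ≤ |a| ^ (2 * n + 2) * (1 + z) * (1 + z) ^ (2 * n + 1) := by gcongr; linarith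
    _ = (|a| * (1 + z)) ^ (2 * n + 2) := by rw [mul_pow]; ring
    _ ≤ (1 + D) ^ (2 * n + 2) := by
      gcongr
      linarith

theorem stmt6 (n : ℕ) (p : MvPolynomial (Fin n) ℝ)
    (f : (Fin n → ℝ) → ℝ) (hf : f = fun x => MvPolynomial.eval x p)
    (K : Set (Fin n → ℝ)) (hKcomp : IsCompact K) (hKconv : Convex ℝ K)
    (hKint : (interior K).Nonempty) :
    ∃ c : ℝ, 0 < c ∧ ∀ r : ℕ, 1 ≤ r →
      lasserreBound n f K (2 * r) - sInf (f '' K) ≤ c / r := by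
  have hfc : Continuous f := by rw [hf]; exact aux_cont p
  have hKne : K.Nonempty := hKint.mono interior_subset
  obtain ⟨x0, hx0, hmin'⟩ := hKcomp.exists_isMinOn hKne hfc.continuousOn
  have hmin : ∀ x ∈ K, f x0 ≤ f x := fun x hx => hmin' hx
  have hinf : sInf (f '' K) = f x0 := by
    apply IsLeast.csInf_eq
    exact ⟨⟨x0, hx0, rfl⟩, by rintro _ ⟨x, hx, rfl⟩; exact hmin x hx⟩
  rw [hinf]
  obtain ⟨L, hL⟩ : ∃ L, LipschitzOnWith L f K := by
    have : ContDiff ℝ 1 f := by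
      rw [hf]
      have := AnalyticOnNhd.eval_mvPolynomial (𝕜 := ℝ) p
      exact contDiff_iff_contDiffAt.2 fun x => (this x (Set.mem_univ x)).contDiffAt
    exact this.contDiffOn.exists_lipschitzOnWith one_ne_zero hKconv hKcomp
  have hLip : ∀ x ∈ K, f x - f x0 ≤ L * ‖x - x0‖ := by
    intro x hx
    have := hL.dist_le_mul x hx x0 hx0
    rw [Real.dist_eq, dist_eq_norm] at this
    exact (le_abs_self _).trans this
  -- the scale
  obtain ⟨D, hD0, hD⟩ : ∃ D : ℝ, 0 < D ∧ ∀ x ∈ K, ∑ i, (x i - x0 i) ^ 2 ≤ D ^ 2 := by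
    have hc : Continuous fun x : Fin n → ℝ => ∑ i, (x i - x0 i) ^ 2 := by fun_prop
    obtain ⟨B, hB⟩ := (hKcomp.image hc).bddAbove
    refine ⟨|B| + 1, by positivity, fun x hx => ?_⟩
    have h1 := hB ⟨x, hx, rfl⟩
    dsimp only at h1
    nlinarith [le_abs_self B, abs_nonneg B]
  set V := volume.real K with hV
  have hVpos : 0 < V := by
    rw [hV, measureReal_def]
    refine ENNReal.toReal_pos ?_ hKcomp.measure_lt_top.ne
    exact (Measure.measure_pos_of_nonempty_interior _ hKint).ne'
  set G : (Fin n → ℝ) → ℝ := fun z => (1 + ‖z‖) ^ (-(2 * n + 1 : ℝ)) with hG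
  have hGint : Integrable G := by
    apply integrable_one_add_norm
    simp only [Module.finrank_fintype_fun_eq_card, Fintype.card_fin]
    have : (0:ℝ) ≤ n := by positivity
    linarith
  have hGnn : ∀ z, 0 ≤ G z := fun z => rpow_nonneg (by positivity) _
  set J := ∫ z, G z with hJ
  have hJnn : 0 ≤ J := integral_nonneg hGnn
  set E : ℝ := (1 + D) ^ (2 * n + 2) with hE
  have hE0 : 0 < E := by positivity
  set b : ℝ := ((2 / π) ^ (n + 1)) ^ 2 with hb
  have hb0 : 0 < b := by positivity
  set g : MvPolynomial (Fin n) ℝ := MvPolynomial.C (1 / D ^ 2) *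
    ∑ i, (MvPolynomial.X i - MvPolynomial.C (x0 i)) ^ 2 with hg
  have hgdeg : g.totalDegree ≤ 2 := by
    refine (MvPolynomial.totalDegree_mul _ _).trans ?_
    rw [MvPolynomial.totalDegree_C, zero_add]
    apply MvPolynomial.totalDegree_finsetSum_le
    intro i _
    refine (MvPolynomial.totalDegree_pow _ _).trans ?_
    have := MvPolynomial.totalDegree_sub (MvPolynomial.X i) (MvPolynomial.C (x0 i) : MvPolynomial (Fin n) ℝ)
    simp at this
    omega
  have hgev : ∀ x, MvPolynomial.eval x g = (√(∑ i, (x i - x0 i) ^ 2) / D) ^ 2 := by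
    intro x
    rw [div_pow, Real.sq_sqrt (by positivity), hg]
    simp
    ring
  refine ⟨L * E * J / (b * V) * (n + 1) + 1, by positivity, fun r hr => ?_⟩
  have hr0 : (0:ℝ) < r := by exact_mod_cast hr
  set k := r / (n + 1) with hk
  obtain ⟨Q, hQdeg, hQ⟩ := aux_needle n g hgdeg k
  set N : ℝ := 2 * k + 1 with hN
  have hN1 : 1 ≤ N := by rw [hN]; have : (0:ℝ) ≤ k := by positivity
                         linarith
  have hN0 : 0 < N := by linarith
  have hNr : (r : ℝ) ≤ N * (n + 1) := by
    have h1 : r < (k + 1) * (n + 1) := by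
      rw [hk, ← Nat.div_lt_iff_lt_mul (by omega)]; omega
    have h2 : (r : ℝ) < (k + 1) * (n + 1) := by exact_mod_cast h1
    refine h2.le.trans ?_
    rw [hN]
    gcongr
    have : (0:ℝ) ≤ k := by positivity
    linarith
  have hqdeg : (Q ^ (n + 1)).totalDegree ≤ 2 * r := by
    refine (MvPolynomial.totalDegree_pow _ _).trans ?_
    have : (n + 1) * k ≤ r := Nat.mul_div_le r (n + 1)
    nlinarith
  have hs1 : ∀ x ∈ K, √(∑ i, (x i - x0 i) ^ 2) / D ≤ 1 := by
    intro x hx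
    rw [div_le_one hD0]
    exact Real.sqrt_le_iff.2 ⟨hD0.le, hD x hx⟩
  have hs2 : ∀ x, ‖x - x0‖ ≤ √(∑ i, (x i - x0 i) ^ 2) := by
    intro x
    rw [pi_norm_le_iff_of_nonneg (by positivity)]
    intro i
    rw [Real.norm_eq_abs, Pi.sub_apply]
    apply Real.abs_le_sqrt
    exact Finset.single_le_sum (f := fun i => (x i - x0 i) ^ 2) (fun i _ => sq_nonneg _) (Finset.mem_univ i)
  have hqc : Continuous fun x => MvPolynomial.eval x (Q ^ (n + 1)) ^ 2 := (aux_cont _).pow 2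
  -- upper bound of the numerator
  have hcomp : Integrable fun x => G (N • (x - x0)) := by
    have := (hGint.comp_smul hN0.ne').comp_sub_right x0
    exact this
  have hcompi : ∫ x, G (N • (x - x0)) = (N ^ n)⁻¹ * J := by
    rw [integral_sub_right_eq_self (fun x => G (N • x)) x0, Measure.integral_comp_smul]
    simp only [Module.finrank_fintype_fun_eq_card, Fintype.card_fin, smul_eq_mul]
    rw [abs_of_pos (by positivity)]
  have hnum : ∫ x in K, MvPolynomial.eval x (Q ^ (n + 1)) ^ 2 * (f x - f x0)
      ≤ L * E / N * ((N ^ n)⁻¹ * J) := by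
    rw [← hcompi, ← integral_const_mul]
    calc _ ≤ ∫ x in K, L * E / N * G (N • (x - x0)) := by
          apply setIntegral_mono_on
          · exact aux_integrableOn hKcomp (hqc.mul (hfc.sub continuous_const))
          · exact (hcomp.const_mul _).integrableOn
          · exact hKcomp.measurableSet
          · intro x hx
            obtain ⟨q1, q2, -⟩ := hQ x _ (by positivity) (hs1 x hx) (hgev x)
            have hz : |MvPolynomial.eval x Q| * (N * ‖x - x0‖) ≤ D := by
              calc _ ≤ |MvPolynomial.eval x Q| * (N * √(∑ i, (x i - x0 i) ^ 2)) := by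
                    gcongr; exact hs2 x
                _ = (|MvPolynomial.eval x Q| * (N * (√(∑ i, (x i - x0 i) ^ 2) / D))) * D := by
                    field_simp
                _ ≤ 1 * D := by gcongr
                _ = D := one_mul _
            have hp := aux_point n _ (N * ‖x - x0‖) D q1 (by positivity) hz
            have hGx : G (N • (x - x0)) = (1 + N * ‖x - x0‖) ^ (-(2 * n + 1 : ℝ)) := by
              rw [hG]; simp only [norm_smul, Real.norm_eq_abs, abs_of_pos hN0]
            rw [← hGx] at hp
            rw [map_pow]
            calc _ ≤ (MvPolynomial.eval x Q ^ (n + 1)) ^ 2 * (L * ‖x - x0‖) := by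
                  gcongr; exact hLip x hx
              _ = L / N * ((MvPolynomial.eval x Q ^ (n + 1)) ^ 2 * (N * ‖x - x0‖)) := by
                  field_simp
              _ ≤ L / N * (E * G (N • (x - x0))) := by gcongr
              _ = _ := by ring
      _ ≤ _ := by
          apply setIntegral_le_integral (hcomp.const_mul _)
          refine Filter.Eventually.of_forall fun x => ?_
          have := hGnn (N • (x - x0))
          simp only [Pi.zero_apply]
          positivity
  -- lower bound of the denominator
  have hden : b * ((N ^ n)⁻¹ * V) ≤ ∫ x in K, MvPolynomial.eval x (Q ^ (n + 1)) ^ 2 := by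
    set S := AffineMap.homothety x0 N⁻¹ '' K with hS
    have hN1' : N⁻¹ ≤ 1 := inv_le_one_of_one_le₀ hN1
    have hSK : S ⊆ K := by
      rintro _ ⟨x, hx, rfl⟩
      rw [AffineMap.homothety_eq_lineMap]
      exact hKconv.lineMap_mem hx0 hx ⟨by positivity, hN1'⟩
    have hSc : IsCompact S := hKcomp.image (AffineMap.homothety_continuous x0 N⁻¹)
    have hSV : volume.real S = (N ^ n)⁻¹ * V := by
      rw [measureReal_def, hS, Measure.addHaar_image_homothety, ENNReal.toReal_mul, hV,
        measureReal_def, ENNReal.toReal_ofReal (abs_nonneg _)]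
      simp only [Module.finrank_fintype_fun_eq_card, Fintype.card_fin]
      rw [abs_of_pos (by positivity), inv_pow]
    rw [← hSV]
    calc b * volume.real S = ∫ x in S, b := by
          rw [setIntegral_const, smul_eq_mul, mul_comm]
      _ ≤ ∫ x in S, MvPolynomial.eval x (Q ^ (n + 1)) ^ 2 := by
          apply setIntegral_mono_on
          · exact aux_integrableOn hSc continuous_const
          · exact aux_integrableOn hSc hqc
          · exact hSc.measurableSet
          · intro y hy
            obtain ⟨-, -, q3⟩ := hQ y _ (by positivity) (hs1 y (hSK hy)) (hgev y)
            have : 2 / π ≤ MvPolynomial.eval y Q := by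
              apply q3
              obtain ⟨x, hx, rfl⟩ := hy
              have e : ∑ i, ((AffineMap.homothety x0 N⁻¹) x i - x0 i) ^ 2
                  = (N⁻¹) ^ 2 * ∑ i, (x i - x0 i) ^ 2 := by
                rw [Finset.mul_sum]
                refine Finset.sum_congr rfl fun i _ => ?_
                simp [AffineMap.homothety_apply]
                ring
              rw [e, Real.sqrt_mul (by positivity), Real.sqrt_sq (by positivity)]
              have := hs1 x hx
              calc _ = √(∑ i, (x i - x0 i) ^ 2) / D := by field_simp
                _ ≤ 1 := this
            rw [map_pow, hb]
            gcongr
      _ ≤ _ := by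
          apply setIntegral_mono_set (aux_integrableOn hKcomp hqc)
          · exact Filter.Eventually.of_forall fun x => sq_nonneg _
          · exact LE.le.eventuallyLE hSK
  have hbV : 0 < b * ((N ^ n)⁻¹ * V) := by positivity
  have hA := hbV.trans_le hden
  refine (aux_upper n f hfc K hKcomp x0 hmin (2 * r) _ hqdeg hA).trans ?_
  calc _ ≤ (L * E / N * ((N ^ n)⁻¹ * J)) / (b * ((N ^ n)⁻¹ * V)) := by
        apply div_le_div₀ (by positivity) hnum hbV hden
    _ = L * E * J / (b * V) / N := by field_simp
    _ ≤ L * E * J / (b * V) * (n + 1) / r := by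
        rw [div_le_div_iff₀ hN0 hr0]
        calc _ ≤ L * E * J / (b * V) * (N * (n + 1)) := by gcongr
          _ = _ := by ring
    _ ≤ _ := by gcongr; linarith
end

section
/- For every integer r ≥ 0, the univariate polynomial φ_{2r}(λ) := Σ_{k=0}^{2r} (−λ)^k/k! is a sum of squares of polynomials, i.e., there exist univariate polynomials p₁, …, p_m with φ_{2r} = p₁² + ⋯ + p_m². -/
lemma fact_add_eq (r i j : ℕ) (hj : j ≤ r) :
    (i + j).factorial = ∑ k ∈ Finset.range (r + 1),
      (i.factorial * i.choose k) * (j.factorial * j.choose k) := by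
  have h1 : (i + j).choose j = ∑ k ∈ Finset.range (j + 1), i.choose k * j.choose k := by
    rw [Nat.add_choose_eq, Finset.Nat.sum_antidiagonal_eq_sum_range_succ_mk]
    refine Finset.sum_congr rfl fun k hk => ?_
    have : k ≤ j := by simpa [Nat.lt_succ_iff] using hk
    simp only [Nat.choose_symm this]
  have h2 : ∑ k ∈ Finset.range (j + 1), i.choose k * j.choose k
      = ∑ k ∈ Finset.range (r + 1), i.choose k * j.choose k := by
    apply Finset.sum_subset
    · intro k; simp only [Finset.mem_range]; omega
    · intro k _ hk
      rw [Nat.choose_eq_zero_of_lt (n := j), mul_zero]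
      simp only [Finset.mem_range] at hk; omega
  have h3 := Nat.add_choose_mul_factorial_mul_factorial i j
  rw [h1, h2] at h3
  rw [← h3, Finset.sum_mul, Finset.sum_mul]
  exact Finset.sum_congr rfl fun k _ => by ring

open Polynomial in
/-- The moment functional `Y ^ n ↦ n!`. -/
noncomputable def momentL (R : Type*) [CommRing R] : Polynomial R →ₗ[R] R :=
  Polynomial.lsum fun n => (n.factorial : R) • LinearMap.id

lemma momentL_monomial {R : Type*} [CommRing R] (n : ℕ) (a : R) :
    momentL R (Polynomial.X ^ n * Polynomial.C a) = n.factorial * a := by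
  rw [mul_comm, Polynomial.C_mul_X_pow_eq_monomial]
  simp [momentL, Polynomial.lsum_apply]

lemma expand_pow {R : Type*} [CommRing R] (x : R) (n : ℕ) :
    (Polynomial.X + Polynomial.C x) ^ n = ∑ i ∈ Finset.range (n + 1),
      Polynomial.X ^ i * Polynomial.C (x ^ (n - i) * (n.choose i : R)) := by
  rw [add_pow]
  refine Finset.sum_congr rfl fun i _ => ?_
  simp [mul_assoc]

lemma key_identity {R : Type*} [CommRing R] (x : R) (r : ℕ) :
    ∑ i ∈ Finset.range (2 * r + 1), (i.factorial : R) * (x ^ (2 * r - i) * ((2 * r).choose i : R))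
    = ∑ k ∈ Finset.range (r + 1), (∑ i ∈ Finset.range (r + 1),
      ((i.factorial * i.choose k : ℕ) : R) * (x ^ (r - i) * (r.choose i : R))) ^ 2 := by
  have h : momentL R ((Polynomial.X + Polynomial.C x) ^ (2 * r)) =
      momentL R ((Polynomial.X + Polynomial.C x) ^ r * (Polynomial.X + Polynomial.C x) ^ r) := by
    rw [← pow_add, two_mul]
  rw [expand_pow, expand_pow, map_sum, Finset.sum_mul_sum, map_sum] at h
  simp only [momentL_monomial] at h
  rw [h]
  simp only [sq, Finset.sum_mul_sum]
  rw [Finset.sum_comm]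
  refine Finset.sum_congr rfl fun i _ => ?_
  rw [map_sum, Finset.sum_comm]
  refine Finset.sum_congr rfl fun j hj => ?_
  rw [mul_mul_mul_comm, ← pow_add, ← Polynomial.C_mul, momentL_monomial,
    fact_add_eq r i j (by simpa [Nat.lt_succ_iff] using hj), Nat.cast_sum, Finset.sum_mul]
  refine Finset.sum_congr rfl fun k _ => ?_
  push_cast
  ring

theorem stmt7 (r : ℕ) :
    ∃ (m : ℕ) (p : Fin m → Polynomial ℝ),
      (∑ k ∈ Finset.range (2 * r + 1),
          Polynomial.C ((-1 : ℝ) ^ k / (k.factorial : ℝ)) * Polynomial.X ^ k)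
        = ∑ i, p i ^ 2 := by
  have hpos : (0 : ℝ) < ((2 * r).factorial : ℝ) := by positivity
  refine ⟨r + 1, fun k => Polynomial.C (√(((2 * r).factorial : ℝ)⁻¹)) *
    ∑ i ∈ Finset.range (r + 1), ((i.factorial * i.choose k : ℕ) : Polynomial ℝ) *
      ((-Polynomial.X) ^ (r - i) * (r.choose i : Polynomial ℝ)), ?_⟩
  simp only [mul_pow (Polynomial.C _)]
  rw [← Finset.mul_sum, Fin.sum_univ_eq_sum_range (fun k => (∑ i ∈ Finset.range (r + 1),
      ((i.factorial * i.choose k : ℕ) : Polynomial ℝ) *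
      ((-Polynomial.X) ^ (r - i) * (r.choose i : Polynomial ℝ))) ^ 2), ← key_identity,
    ← Polynomial.C_pow, Real.sq_sqrt (by positivity), Finset.mul_sum,
    ← Finset.sum_range_reflect]
  refine Finset.sum_congr rfl fun i hi => ?_
  have hi' : i ≤ 2 * r := by simpa [Nat.lt_succ_iff] using hi
  have e : 2 * r + 1 - 1 - i = 2 * r - i := by omega
  have hc : (((2 * r).choose i : ℕ) : ℝ) * i.factorial * (2 * r - i).factorial
      = (2 * r).factorial := by exact_mod_cast Nat.choose_mul_factorial_mul_factorial hi'
  rw [e, neg_pow (Polynomial.X : Polynomial ℝ)]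
  have : (-1 : ℝ) ^ (2 * r - i) / ((2 * r - i).factorial : ℝ) =
      ((2 * r).factorial : ℝ)⁻¹ * (i.factorial * ((-1) ^ (2 * r - i) * ((2 * r).choose i : ℝ))) := by
    rw [← hc]
    have : (((2 * r).choose i : ℕ) : ℝ) ≠ 0 := by
      exact_mod_cast (Nat.choose_pos hi').ne'
    field_simp
  rw [this]
  simp only [Polynomial.C_mul, Polynomial.C_pow, Polynomial.C_neg, Polynomial.C_1, map_natCast]
  ring
end

section
/- Let f : ℝⁿ → ℝ be continuous, let K ⊆ ℝⁿ be compact with positive Lebesgue measure, assume f(x) ≥ 0 for all x ∈ K, and let t > 0 and r ≥ 0 be an integer. Then for every x ∈ K, φ_{2r,t}(x) ≤ P_{f/t}(x) + (f(x)/t)^{2r+1} / ((2r+1)! · ∫_K e^{−f(x')/t} dx'). -/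
open MeasureTheory Real

/-- The truncation `φ_{2r}` at order `2r` of the Taylor expansion of `e^{-λ}`. -/
noncomputable def phiTrunc (r : ℕ) (l : ℝ) : ℝ :=
  ∑ k ∈ Finset.range (2 * r + 1), (-l) ^ k / (k.factorial : ℝ)

theorem expTrunc_hasDeriv (m : ℕ) (l : ℝ) :
    HasDerivAt (fun l : ℝ => ∑ k ∈ Finset.range (m + 1), (-l) ^ k / (k.factorial : ℝ))
      (-∑ k ∈ Finset.range m, (-l) ^ k / (k.factorial : ℝ)) l := by
  induction m with
  | zero => simpa using hasDerivAt_const l (1 : ℝ)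
  | succ m ih =>
    have h1 : HasDerivAt (fun l : ℝ => (-l) ^ (m + 1) / ((m + 1).factorial : ℝ))
        (-((-l) ^ m / (m.factorial : ℝ))) l := by
      have h := (((hasDerivAt_id l).neg).pow (m + 1)).div_const ((m + 1).factorial : ℝ)
      refine h.congr_deriv ?_
      have : (m.factorial : ℝ) ≠ 0 := by positivity
      have h2 : (m : ℝ) + 1 ≠ 0 := by positivity
      simp only [Nat.factorial_succ, Nat.add_sub_cancel, Pi.neg_apply, id]
      push_cast
      field_simp
    have h := ih.add h1
    rw [Finset.sum_range_succ _ m, neg_add]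
    refine h.congr_of_eventuallyEq (Filter.Eventually.of_forall fun y => ?_)
    simp only [Pi.add_apply]
    rw [Finset.sum_range_succ _ (m + 1)]

theorem expTrunc_sign (m : ℕ) : ∀ l : ℝ, 0 ≤ l →
    0 ≤ (-1 : ℝ) ^ m * (Real.exp (-l) - ∑ k ∈ Finset.range m, (-l) ^ k / (k.factorial : ℝ)) := by
  induction m with
  | zero => intro l _; simpa using (Real.exp_pos (-l)).le
  | succ m ih =>
    intro l hl
    have hd : ∀ y : ℝ, HasDerivAt (fun l : ℝ => (-1 : ℝ) ^ (m + 1) *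
        (Real.exp (-l) - ∑ k ∈ Finset.range (m + 1), (-l) ^ k / (k.factorial : ℝ)))
        ((-1 : ℝ) ^ m *
        (Real.exp (-y) - ∑ k ∈ Finset.range m, (-y) ^ k / (k.factorial : ℝ))) y := by
      intro y
      have h := (((hasDerivAt_neg y).exp).sub (expTrunc_hasDeriv m y)).const_mul ((-1 : ℝ) ^ (m + 1))
      refine h.congr_deriv ?_
      ring
    have hm : MonotoneOn (fun l : ℝ => (-1 : ℝ) ^ (m + 1) *
        (Real.exp (-l) - ∑ k ∈ Finset.range (m + 1), (-l) ^ k / (k.factorial : ℝ)))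
        (Set.Ici 0) := by
      apply monotoneOn_of_deriv_nonneg (convex_Ici 0)
      · exact fun y _ => (hd y).continuousAt.continuousWithinAt
      · exact fun y _ => (hd y).differentiableAt.differentiableWithinAt
      · intro y hy
        rw [(hd y).deriv]
        rw [interior_Ici] at hy
        exact ih y (le_of_lt hy)
    have h := hm (Set.mem_Ici.2 le_rfl) (Set.mem_Ici.2 hl) hl
    simpa [Finset.sum_range_succ'] using h

theorem stmt9 (n : ℕ) (f : (Fin n → ℝ) → ℝ) (hf : Continuous f)
    (K : Set (Fin n → ℝ)) (hKcomp : IsCompact K) (hKpos : 0 < volume K)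
    (hfnn : ∀ x ∈ K, 0 ≤ f x)
    (t : ℝ) (ht : 0 < t) (r : ℕ) (x : Fin n → ℝ) (hx : x ∈ K) :
    phiTrunc r (f x / t) / (∫ x' in K, phiTrunc r (f x' / t))
      ≤ Real.exp (-f x / t) / (∫ x' in K, Real.exp (-f x' / t))
        + (f x / t) ^ (2 * r + 1) /
            (((2 * r + 1).factorial : ℝ) * ∫ x' in K, Real.exp (-f x' / t)) := by
  have lower : ∀ y ∈ K, Real.exp (-f y / t) ≤ phiTrunc r (f y / t) := by
    intro y hy
    have h := expTrunc_sign (2 * r + 1) (f y / t) (div_nonneg (hfnn y hy) ht.le)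
    rw [Odd.neg_one_pow ⟨r, rfl⟩] at h
    rw [neg_div]
    unfold phiTrunc
    linarith
  have upper : phiTrunc r (f x / t) ≤
      Real.exp (-f x / t) + (f x / t) ^ (2 * r + 1) / ((2 * r + 1).factorial : ℝ) := by
    have h := expTrunc_sign (2 * r + 1 + 1) (f x / t) (div_nonneg (hfnn x hx) ht.le)
    rw [Even.neg_one_pow ⟨r + 1, by ring⟩, Finset.sum_range_succ,
      Odd.neg_pow ⟨r, rfl⟩, neg_div] at h
    rw [neg_div]
    unfold phiTrunc
    linarith
  have ce : Continuous (fun y => Real.exp (-f y / t)) := by fun_prop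
  have cp : Continuous (fun y => phiTrunc r (f y / t)) := by unfold phiTrunc; fun_prop
  have ie : IntegrableOn (fun y => Real.exp (-f y / t)) K := ce.continuousOn.integrableOn_compact hKcomp
  have ip : IntegrableOn (fun y => phiTrunc r (f y / t)) K := cp.continuousOn.integrableOn_compact hKcomp
  have hle : ∫ x' in K, Real.exp (-f x' / t) ≤ ∫ x' in K, phiTrunc r (f x' / t) :=
    setIntegral_mono_on ie ip hKcomp.measurableSet lower
  have hpos : 0 < ∫ x' in K, Real.exp (-f x' / t) := by
    haveI : NeZero (volume.restrict K) := ⟨by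
      rw [Ne, Measure.restrict_eq_zero]; exact hKpos.ne'⟩
    exact integral_exp_pos ie
  have hnum : 0 ≤ phiTrunc r (f x / t) := (Real.exp_pos _).le.trans (lower x hx)
  calc _ ≤ phiTrunc r (f x / t) / ∫ x' in K, Real.exp (-f x' / t) :=
        div_le_div_of_nonneg_left hnum hpos hle
    _ ≤ (Real.exp (-f x / t) + (f x / t) ^ (2 * r + 1) / ((2 * r + 1).factorial : ℝ)) /
          ∫ x' in K, Real.exp (-f x' / t) := div_le_div_of_nonneg_right upper hpos.le
    _ = _ := by rw [add_div, div_div]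
end

section
/- Let f : ℝⁿ → ℝ be a polynomial of degree d ≥ 1, let K ⊆ ℝⁿ be compact with positive Lebesgue measure, assume f(x) ≥ 0 for all x ∈ K, and let t > 0 and r ≥ 0 be an integer. Then f̲^(rd)_K ≤ ∫_K f(x) φ_{2r,t}(x) dx ≤ E_t[f] + (∫_K (f(x) − f_min,K) · f(x)^{2r+1} dx) / (t^{2r+1} · (2r+1)! · ∫_K e^{−f(x)/t} dx). -/
open MeasureTheory Real

lemma aux_sos (r : ℕ) (x : ℝ) :
    ∑ k ∈ Finset.range (2 * r + 1), x ^ k / (k.factorial : ℝ) =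
      ((r.factorial : ℝ) ^ 2 / ((2 * r).factorial : ℝ)) *
        ∑ k ∈ Finset.range (r + 1),
          (∑ i ∈ Finset.range (r + 1), x ^ i / (i.factorial : ℝ) * ((r - i).choose k : ℝ)) ^ 2 := by
  have hv : ∀ a ≤ r, ∀ b ≤ r, ∑ k ∈ Finset.range (r + 1), (a.choose k : ℝ) * (b.choose k : ℝ)
      = ((a + b).choose a : ℝ) := by
    intro a ha b hb
    have h1 : (a + b).choose a = ∑ k ∈ Finset.range (a + 1), b.choose k * a.choose k := by
      rw [Nat.add_comm a b, Nat.add_choose_eq, Finset.Nat.sum_antidiagonal_eq_sum_range_succ_mk]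
      refine Finset.sum_congr rfl fun k hk => ?_
      simp only [Finset.mem_range] at hk
      simp only
      rw [Nat.choose_symm (by omega)]
    rw [h1]
    push_cast
    symm
    rw [Finset.sum_subset (s₂ := Finset.range (r + 1))]
    · exact Finset.sum_congr rfl fun k _ => mul_comm _ _
    · intro k; simp only [Finset.mem_range]; omega
    · intro k _ hk
      simp only [Finset.mem_range] at hk
      rw [Nat.choose_eq_zero_of_lt (show a < k by omega)]; simp
  have h2 : ∑ k ∈ Finset.range (r + 1),
      (∑ i ∈ Finset.range (r + 1), x ^ i / (i.factorial : ℝ) * ((r - i).choose k : ℝ)) ^ 2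
      = ∑ i ∈ Finset.range (r + 1), ∑ j ∈ Finset.range (r + 1),
        x ^ (i + j) / ((i.factorial : ℝ) * j.factorial) * (((r - i) + (r - j)).choose (r - i) : ℝ) := by
    simp_rw [sq, Finset.sum_mul_sum]
    rw [Finset.sum_comm]
    refine Finset.sum_congr rfl fun i _ => ?_
    rw [Finset.sum_comm]
    refine Finset.sum_congr rfl fun j _ => ?_
    rw [← hv _ (Nat.sub_le _ _) _ (Nat.sub_le _ _), Finset.mul_sum]
    refine Finset.sum_congr rfl fun k _ => ?_
    rw [pow_add]
    field_simp
  have h3 : ∀ i ∈ Finset.range (r + 1), ∑ j ∈ Finset.range (r + 1),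
        x ^ (i + j) / ((i.factorial : ℝ) * j.factorial) * (((r - i) + (r - j)).choose (r - i) : ℝ)
      = ∑ m ∈ Finset.range (2 * r + 1), x ^ m / (m.factorial : ℝ) *
          ((m.choose i : ℝ) * ((2 * r - m).choose (r - i) : ℝ)) := by
    intro i hi
    simp only [Finset.mem_range] at hi
    refine Finset.sum_of_injOn (fun j => i + j) ?_ ?_ ?_ ?_
    · intro a _ b _ h; simpa using h
    · intro j hj
      simp only [Finset.coe_range, Set.mem_Iio] at hj ⊢
      omega
    · intro m hm hm'
      simp only [Finset.mem_range] at hm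
      by_cases h : m < i
      · rw [Nat.choose_eq_zero_of_lt h]; simp
      · have : r < m - i := by
          by_contra hc
          apply hm'
          refine ⟨m - i, ?_, ?_⟩
          · simp only [Finset.coe_range, Set.mem_Iio]; omega
          · simp only; omega
        rw [Nat.choose_eq_zero_of_lt (show 2 * r - m < r - i by omega)]; simp
    · intro j hj
      simp only [Finset.mem_range] at hj
      have e1 : 2 * r - (i + j) = (r - i) + (r - j) := by omega
      simp only [e1]
      rw [Nat.cast_add_choose ℝ (a := i) (b := j)]
      field_simp
  have h4 : ∀ m ∈ Finset.range (2 * r + 1), ∑ i ∈ Finset.range (r + 1),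
      ((m.choose i : ℝ) * ((2 * r - m).choose (r - i) : ℝ)) = ((2 * r).choose r : ℝ) := by
    intro m hm
    simp only [Finset.mem_range] at hm
    have e : 2 * r = m + (2 * r - m) := by omega
    conv_rhs => rw [e, Nat.add_choose_eq, Finset.Nat.sum_antidiagonal_eq_sum_range_succ_mk]
    push_cast
    rfl
  rw [h2, Finset.sum_congr rfl h3, Finset.sum_comm, Finset.mul_sum]
  refine Finset.sum_congr rfl fun m hm => ?_
  rw [← Finset.mul_sum, h4 m hm, two_mul, Nat.cast_add_choose]
  field_simp

lemma aux_taylor (N : ℕ) : ∀ l : ℝ, 0 ≤ l →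
    0 ≤ (-1 : ℝ) ^ N * (Real.exp (-l) - ∑ k ∈ Finset.range N, (-l) ^ k / (k.factorial : ℝ)) := by
  induction N with
  | zero => intro l _; simp; positivity
  | succ N ih =>
    intro l hl
    let g : ℝ → ℝ := fun l => (-1 : ℝ) ^ (N + 1) *
      (Real.exp (-l) - ∑ k ∈ Finset.range (N + 1), (-l) ^ k / (k.factorial : ℝ))
    have hd : ∀ y, HasDerivAt g ((-1 : ℝ) ^ N *
        (Real.exp (-y) - ∑ k ∈ Finset.range N, (-y) ^ k / (k.factorial : ℝ))) y := by
      intro y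
      have hs : HasDerivAt (fun l : ℝ => ∑ k ∈ Finset.range (N + 1), (-l) ^ k / (k.factorial : ℝ))
          (-∑ k ∈ Finset.range N, (-y) ^ k / (k.factorial : ℝ)) y := by
        have h := HasDerivAt.fun_sum (u := Finset.range (N + 1))
          (A := fun k (l : ℝ) => (-l) ^ k / (k.factorial : ℝ))
          (A' := fun k => ((k : ℝ) * (-y) ^ (k - 1) * (-1)) / (k.factorial : ℝ)) (x := y)
          (fun k _ => ((hasDerivAt_neg y).pow k).div_const _)
        refine h.congr_deriv ?_
        rw [Finset.sum_range_succ']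
        simp only [CharP.cast_eq_zero, zero_mul, zero_div, add_zero]
        symm
        rw [← Finset.sum_neg_distrib]
        refine Finset.sum_congr rfl fun k _ => ?_
        rw [Nat.factorial_succ]
        push_cast
        field_simp
      have he : HasDerivAt (fun l : ℝ => Real.exp (-l)) (Real.exp (-y) * (-1)) y :=
        (hasDerivAt_neg y).exp
      have := (he.sub hs).const_mul ((-1 : ℝ) ^ (N + 1))
      refine this.congr_deriv ?_
      rw [pow_succ]; ring
    have hm : MonotoneOn g (Set.Ici 0) := by
      refine monotoneOn_of_deriv_nonneg (convex_Ici 0)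
        (fun y _ => (hd y).continuousAt.continuousWithinAt)
        (fun y _ => (hd y).differentiableAt.differentiableWithinAt) ?_
      intro y hy
      rw [interior_Ici] at hy
      rw [(hd y).deriv]
      exact ih y (le_of_lt hy)
    have h0 : g 0 = 0 := by
      simp only [g]
      rw [Finset.sum_range_succ']
      simp
    have := hm (Set.mem_Ici.2 le_rfl) (Set.mem_Ici.2 hl) hl
    rw [h0] at this
    exact this

lemma aux_lower (r : ℕ) (l : ℝ) (hl : 0 ≤ l) : Real.exp (-l) ≤ phiTrunc r l := by
  have := aux_taylor (2 * r + 1) l hl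
  rw [pow_succ, pow_mul] at this
  unfold phiTrunc
  norm_num at this
  linarith

lemma aux_upper_s10 (r : ℕ) (l : ℝ) (hl : 0 ≤ l) :
    phiTrunc r l ≤ Real.exp (-l) + l ^ (2 * r + 1) / ((2 * r + 1).factorial : ℝ) := by
  have := aux_taylor (2 * r + 2) l hl
  rw [show 2 * r + 2 = 2 * (r + 1) by ring, pow_mul,
    show 2 * (r + 1) = (2 * r + 1) + 1 by ring, Finset.sum_range_succ,
    Odd.neg_pow ⟨r, rfl⟩] at this
  unfold phiTrunc
  rw [neg_div] at this
  norm_num at this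
  linarith

lemma aux_cont_s10 (r : ℕ) : Continuous (phiTrunc r) := by
  unfold phiTrunc
  fun_prop

theorem stmt10 (n : ℕ) (p : MvPolynomial (Fin n) ℝ) (d : ℕ) (hd : 1 ≤ d)
    (hdeg : p.totalDegree = d)
    (f : (Fin n → ℝ) → ℝ) (hf : f = fun x => MvPolynomial.eval x p)
    (K : Set (Fin n → ℝ)) (hKcomp : IsCompact K) (hKpos : 0 < volume K)
    (hfnn : ∀ x ∈ K, 0 ≤ f x)
    (t : ℝ) (ht : 0 < t) (r : ℕ) :
    lasserreBound n f K (r * d)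
        ≤ (∫ x in K, f x * (phiTrunc r (f x / t) / (∫ x' in K, phiTrunc r (f x' / t)))) ∧
      (∫ x in K, f x * (phiTrunc r (f x / t) / (∫ x' in K, phiTrunc r (f x' / t))))
        ≤ boltzmannExp n f K t
          + (∫ x in K, (f x - sInf (f '' K)) * f x ^ (2 * r + 1)) /
              (t ^ (2 * r + 1) * ((2 * r + 1).factorial : ℝ) *
                ∫ x in K, Real.exp (-f x / t)) := by
  have hfc : Continuous f := by
    rw [hf]; exact MvPolynomial.continuous_eval p
  have hint : ∀ g : (Fin n → ℝ) → ℝ, Continuous g → IntegrableOn g K volume :=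
    fun g hg => hg.continuousOn.integrableOn_compact hKcomp
  have hKm : MeasurableSet K := hKcomp.measurableSet
  have hKne : volume K ≠ 0 := hKpos.ne'
  have hφc : Continuous fun x => phiTrunc r (f x / t) :=
    (aux_cont_s10 r).comp (hfc.div_const t)
  have hec : Continuous fun x => Real.exp (-f x / t) := by fun_prop
  have hneg : ∀ x, -f x / t = -(f x / t) := fun x => neg_div _ _
  set Z := ∫ x in K, Real.exp (-f x / t) with hZ
  set Φ := ∫ x in K, phiTrunc r (f x / t) with hΦ
  have hZpos : 0 < Z := by
    haveI : NeZero (volume.restrict K) := ⟨by simpa using hKne⟩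
    exact integral_exp_pos (hint _ hec)
  have hZΦ : Z ≤ Φ := by
    refine setIntegral_mono_on (hint _ hec) (hint _ hφc) hKm fun x hx => ?_
    rw [hneg]
    exact aux_lower r _ (div_nonneg (hfnn x hx) ht.le)
  have hΦpos : 0 < Φ := hZpos.trans_le hZΦ
  constructor
  · unfold lasserreBound
    refine csInf_le ⟨0, ?_⟩ ?_
    · rintro y ⟨m, q, -, -, rfl⟩
      refine setIntegral_nonneg hKm fun x hx => mul_nonneg ?_ (hfnn x hx)
      rw [map_sum]
      refine Finset.sum_nonneg fun i _ => ?_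
      rw [map_pow]; positivity
    · let c : ℝ := (r.factorial : ℝ) ^ 2 / ((2 * r).factorial : ℝ) / Φ
      have hc : 0 ≤ c := by positivity
      let q : Fin (r + 1) → MvPolynomial (Fin n) ℝ := fun k =>
        MvPolynomial.C (√c) * ∑ i ∈ Finset.range (r + 1),
          MvPolynomial.C ((-t⁻¹) ^ i / (i.factorial : ℝ) * ((r - i).choose k : ℝ)) * p ^ i
      have hq : ∀ x, MvPolynomial.eval x (∑ k, q k ^ 2) = phiTrunc r (f x / t) / Φ := by
        intro x
        unfold phiTrunc
        rw [aux_sos, map_sum, Finset.sum_range, Finset.mul_sum, Finset.sum_div]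
        refine Finset.sum_congr rfl fun k _ => ?_
        simp only [q, map_pow, map_mul, map_sum, MvPolynomial.eval_C]
        rw [mul_pow, Real.sq_sqrt hc]
        have : ∀ i ∈ Finset.range (r + 1),
            (-t⁻¹) ^ i / (i.factorial : ℝ) * ((r - i).choose k : ℝ) * (MvPolynomial.eval x p) ^ i
            = (-(f x / t)) ^ i / (i.factorial : ℝ) * ((r - i).choose k : ℝ) := by
          intro i _
          rw [hf, show -(MvPolynomial.eval x p / t) = (-t⁻¹) * MvPolynomial.eval x p by ring,
            mul_pow]
          ring
        rw [Finset.sum_congr rfl this]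
        simp only [c]
        ring
      refine ⟨r + 1, q, ?_, ?_, ?_⟩
      · intro k
        refine (MvPolynomial.totalDegree_mul _ _).trans ?_
        rw [MvPolynomial.totalDegree_C, zero_add]
        refine MvPolynomial.totalDegree_finsetSum_le fun i hi => ?_
        refine (MvPolynomial.totalDegree_mul _ _).trans ?_
        rw [MvPolynomial.totalDegree_C, zero_add]
        refine (MvPolynomial.totalDegree_pow _ _).trans ?_
        rw [hdeg]
        simp only [Finset.mem_range] at hi
        exact Nat.mul_le_mul_right d (by omega)
      · simp_rw [hq]
        rw [integral_div]
        exact div_self hΦpos.ne'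
      · simp_rw [hq]
        refine integral_congr_ae (Filter.Eventually.of_forall fun x => ?_)
        simp only
        ring
  · set m := sInf (f '' K) with hm
    have hmf : ∀ x ∈ K, 0 ≤ f x - m := by
      intro x hx
      have : m ≤ f x := csInf_le ⟨0, by rintro _ ⟨y, hy, rfl⟩; exact hfnn y hy⟩ ⟨x, hx, rfl⟩
      linarith
    have h1 : (∫ x in K, f x * (phiTrunc r (f x / t) / Φ))
        = (∫ x in K, (f x - m) * phiTrunc r (f x / t)) / Φ + m := by
      have e1 : (∫ x in K, (f x - m) * phiTrunc r (f x / t))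
          = (∫ x in K, f x * phiTrunc r (f x / t)) - m * Φ := by
        rw [hΦ, ← integral_const_mul, ← integral_sub (hint (fun x => f x * phiTrunc r (f x / t)) (hfc.mul hφc))
          (hint (fun x => m * phiTrunc r (f x / t)) (continuous_const.mul hφc))]
        simp_rw [sub_mul]
      rw [e1]
      simp_rw [← mul_div_assoc]
      rw [integral_div]
      field_simp
      ring
    have h2 : boltzmannExp n f K t
        = (∫ x in K, (f x - m) * Real.exp (-f x / t)) / Z + m := by
      have e1 : (∫ x in K, (f x - m) * Real.exp (-f x / t))
          = (∫ x in K, f x * Real.exp (-f x / t)) - m * Z := by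
        rw [hZ, ← integral_const_mul, ← integral_sub (hint (fun x => f x * Real.exp (-f x / t)) (hfc.mul hec))
          (hint (fun x => m * Real.exp (-f x / t)) (continuous_const.mul hec))]
        simp_rw [sub_mul]
      rw [e1]
      unfold boltzmannExp
      rw [← hZ]
      field_simp
      ring
    have h3 : (∫ x in K, (f x - m) * phiTrunc r (f x / t)) ≤
        (∫ x in K, (f x - m) * Real.exp (-f x / t)) +
        (∫ x in K, (f x - m) * f x ^ (2 * r + 1)) /
          (t ^ (2 * r + 1) * ((2 * r + 1).factorial : ℝ)) := by
      have c1 : Continuous fun x => (f x - m) * Real.exp (-f x / t) := by fun_prop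
      have c2 : Continuous fun x => (f x - m) * f x ^ (2 * r + 1) /
          (t ^ (2 * r + 1) * ((2 * r + 1).factorial : ℝ)) := by fun_prop
      rw [← integral_div, ← integral_add (hint _ c1) (hint _ c2)]
      refine setIntegral_mono_on (hint _ ((hfc.sub continuous_const).mul hφc))
        (hint _ (c1.add c2)) hKm fun x hx => ?_
      have := mul_le_mul_of_nonneg_left
        (aux_upper_s10 r (f x / t) (div_nonneg (hfnn x hx) ht.le)) (hmf x hx)
      refine this.trans (le_of_eq ?_)
      rw [hneg, div_pow, mul_add]
      field_simp
    have h0 : 0 ≤ ∫ x in K, (f x - m) * phiTrunc r (f x / t) := by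
      refine setIntegral_nonneg hKm fun x hx => mul_nonneg (hmf x hx) ?_
      exact (Real.exp_pos _).le.trans (aux_lower r _ (div_nonneg (hfnn x hx) ht.le))
    rw [h1, h2]
    have h4 := (div_le_div_of_nonneg_left h0 hZpos hZΦ).trans
      (div_le_div_of_nonneg_right h3 hZpos.le)
    rw [add_div, div_div] at h4
    linarith
end

section
/- Let M > 0, t > 0, and let r ≥ 1 be an integer with r ≥ e·M/t. Then 2·M^{2(r+1)}·e^{M/t} / (t^{2r+1}·(2r+1)!) < M/2^r. -/
theorem stmt12 (M t : ℝ) (hM : 0 < M) (ht : 0 < t) (r : ℕ) (hr1 : 1 ≤ r)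
    (hr : Real.exp 1 * M / t ≤ r) :
    2 * M ^ (2 * (r + 1)) * Real.exp (M / t) /
        (t ^ (2 * r + 1) * ((2 * r + 1).factorial : ℝ))
      < M / 2 ^ r := by
  have he := Real.exp_pos 1
  have he2 := Real.exp_one_gt_two
  obtain ⟨x, hx⟩ : ∃ x, x = M / t := ⟨_, rfl⟩
  have hx0 : 0 < x := by rw [hx]; positivity
  have hMx : M = x * t := by rw [hx]; field_simp
  have hxr : Real.exp 1 * x ≤ r := by rw [hx, ← mul_div_assoc]; exact hr
  have hexp : Real.exp x ≤ 2 ^ r := by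
    have h2 : (2:ℝ) ^ r = Real.exp (r * Real.log 2) := by
      rw [Real.exp_nat_mul, Real.exp_log (by norm_num)]
    rw [h2]
    apply Real.exp_le_exp.mpr
    have hl := Real.log_two_gt_d9
    have hrr : (0:ℝ) ≤ r := Nat.cast_nonneg r
    nlinarith
  have hst := Stirling.le_factorial_stirling (2 * r + 1)
  have hs : (1:ℝ) ≤ √(2 * Real.pi * ((2 * r + 1 : ℕ) : ℝ)) := by
    rw [Real.one_le_sqrt]
    have := Real.pi_gt_three
    have hrr : (0:ℝ) ≤ r := Nat.cast_nonneg r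
    push_cast
    nlinarith
  have hlt : (2 * x) ^ (2 * r + 1) < (((2 * r + 1 : ℕ) : ℝ) / Real.exp 1) ^ (2 * r + 1) := by
    apply pow_lt_pow_left₀ _ (by positivity) (by omega)
    rw [lt_div_iff₀ he]
    push_cast
    linarith
  have hfac : (2 * x) ^ (2 * r + 1) < ((2 * r + 1).factorial : ℝ) :=
    lt_of_lt_of_le hlt (le_trans (le_mul_of_one_le_left (by positivity) hs) hst)
  have key : 2 * x ^ (2 * r + 1) * Real.exp x * 2 ^ r < ((2 * r + 1).factorial : ℝ) := by
    refine lt_of_le_of_lt ?_ hfac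
    calc 2 * x ^ (2 * r + 1) * Real.exp x * 2 ^ r
        ≤ 2 * x ^ (2 * r + 1) * 2 ^ r * 2 ^ r := by gcongr
      _ = (2 * x) ^ (2 * r + 1) := by rw [mul_pow]; ring
  rw [← hx, div_lt_div_iff₀ (by positivity) (by positivity)]
  calc 2 * M ^ (2 * (r + 1)) * Real.exp x * 2 ^ r
      = (M * t ^ (2 * r + 1)) * (2 * x ^ (2 * r + 1) * Real.exp x * 2 ^ r) := by
        rw [hMx]; ring
    _ < (M * t ^ (2 * r + 1)) * ((2 * r + 1).factorial : ℝ) :=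
        mul_lt_mul_of_pos_left key (by positivity)
    _ = _ := by ring
end

section
/- Let f : ℝⁿ → ℝ be continuous and let K ⊆ ℝⁿ be a convex body. Then lim_{t → 0⁺} E_t[f] = min_{x∈K} f(x). -/
open MeasureTheory Real

theorem stmt16 (n : ℕ) (f : (Fin n → ℝ) → ℝ) (hf : Continuous f)
    (K : Set (Fin n → ℝ)) (hKcomp : IsCompact K) (hKconv : Convex ℝ K)
    (hKint : (interior K).Nonempty) :
    Filter.Tendsto (fun t => boltzmannExp n f K t) (nhdsWithin 0 (Set.Ioi 0))
      (nhds (sInf (f '' K))) := by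
  have hKne : K.Nonempty := hKint.mono interior_subset
  have hKm : MeasurableSet K := hKcomp.measurableSet
  obtain ⟨x0, hx0, hmeq, hmin⟩ := hKcomp.exists_sInf_image_eq_and_le hKne hf.continuousOn
  rw [hmeq]
  obtain ⟨x1, hx1, hmax⟩ := hKcomp.exists_isMaxOn hKne hf.continuousOn
  have hKfin : volume K ≠ ⊤ := hKcomp.measure_lt_top.ne
  have hint : ∀ g : (Fin n → ℝ) → ℝ, Continuous g → IntegrableOn g K :=
    fun g hg => hg.continuousOn.integrableOn_compact hKcomp
  have hcE : ∀ t : ℝ, Continuous fun x => Real.exp (-f x / t) := fun t => by fun_prop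
  have hcF : ∀ t : ℝ, Continuous fun x => f x * Real.exp (-f x / t) := fun t => by fun_prop
  have key : ∀ ε : ℝ, 0 < ε → ∃ u : ℝ, 0 < u ∧ ∀ t : ℝ, 0 < t →
      u * Real.exp (-(f x0 + ε / 2) / t) ≤ ∫ x in K, Real.exp (-f x / t) := by
    intro ε hε
    set U := interior K ∩ {x | f x < f x0 + ε / 2} with hU
    have hUo : IsOpen U := isOpen_interior.inter (isOpen_lt hf continuous_const)
    have hUK : U ⊆ K := fun x hx => interior_subset hx.1
    have hUne : U.Nonempty := by
      have hcl : x0 ∈ closure (interior K) := by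
        rw [hKconv.closure_interior_eq_closure_of_nonempty_interior hKint]
        exact subset_closure hx0
      have := mem_closure_iff.1 hcl {x | f x < f x0 + ε / 2} (isOpen_lt hf continuous_const)
        (by simp only [Set.mem_setOf_eq]; linarith)
      rwa [Set.inter_comm] at this
    have hUfin : volume U ≠ ⊤ := ((measure_mono hUK).trans_lt hKcomp.measure_lt_top).ne
    refine ⟨(volume U).toReal, ENNReal.toReal_pos (hUo.measure_pos volume hUne).ne' hUfin, ?_⟩
    intro t ht
    calc (volume U).toReal * Real.exp (-(f x0 + ε / 2) / t)
        = ∫ x in U, Real.exp (-(f x0 + ε / 2) / t) := by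
          rw [setIntegral_const, smul_eq_mul, Measure.real]
      _ ≤ ∫ x in U, Real.exp (-f x / t) := by
          refine setIntegral_mono_on ?_ ((hint _ (hcE t)).mono_set hUK) hUo.measurableSet ?_
          · exact (hint _ continuous_const).mono_set hUK
          · intro x hx
            have := hx.2
            simp only [Set.mem_setOf_eq] at this
            apply Real.exp_le_exp.2
            gcongr
      _ ≤ ∫ x in K, Real.exp (-f x / t) :=
          setIntegral_mono_set (hint _ (hcE t))
            (Filter.Eventually.of_forall fun x => (Real.exp_pos _).le)
            (Filter.Eventually.of_forall hUK)
  have hZ : ∀ t : ℝ, 0 < t → 0 < ∫ x in K, Real.exp (-f x / t) := by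
    intro t ht
    obtain ⟨u, hu, h⟩ := key 1 one_pos
    exact lt_of_lt_of_le (by positivity) (h t ht)
  have hlow : ∀ t : ℝ, 0 < t → f x0 ≤ boltzmannExp n f K t := by
    intro t ht
    rw [boltzmannExp, le_div_iff₀ (hZ t ht), ← integral_const_mul]
    refine setIntegral_mono_on ((hint _ (hcE t)).const_mul _) (hint _ (hcF t)) hKm ?_
    intro x hx
    exact mul_le_mul_of_nonneg_right (hmin x hx) (Real.exp_pos _).le
  have hup : ∀ ε : ℝ, 0 < ε → ∃ C : ℝ, ∀ t : ℝ, 0 < t →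
      boltzmannExp n f K t ≤ f x0 + ε + C * Real.exp (-(ε / 2) / t) := by
    intro ε hε
    obtain ⟨u, hu, h⟩ := key ε hε
    set M := f x1 - f x0 with hM
    have hM0 : 0 ≤ M := sub_nonneg.2 (hmin x1 hx1)
    set V := (volume K).toReal with hV
    have hV0 : 0 ≤ V := ENNReal.toReal_nonneg
    refine ⟨M * V / u, fun t ht => ?_⟩
    rw [boltzmannExp, div_le_iff₀ (hZ t ht)]
    have h1 : ∫ x in K, f x * Real.exp (-f x / t) ≤
        ∫ x in K, ((f x0 + ε) * Real.exp (-f x / t) + M * Real.exp (-(f x0 + ε) / t)) := by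
      refine setIntegral_mono_on (hint _ (hcF t)) (hint _ (by fun_prop)) hKm ?_
      intro x hx
      have hle : f x ≤ f x1 := hmax hx
      rcases le_total (f x) (f x0 + ε) with hc | hc
      · have := mul_le_mul_of_nonneg_right hc (Real.exp_pos (-f x / t)).le
        have : 0 ≤ M * Real.exp (-(f x0 + ε) / t) := by positivity
        linarith
      · have he : Real.exp (-f x / t) ≤ Real.exp (-(f x0 + ε) / t) := by
          apply Real.exp_le_exp.2
          gcongr
        have : (f x - (f x0 + ε)) * Real.exp (-f x / t) ≤ M * Real.exp (-(f x0 + ε) / t) :=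
          mul_le_mul (by linarith) he (Real.exp_pos _).le hM0
        linarith
    rw [integral_add ((hint _ (hcE t)).const_mul _) (hint _ continuous_const),
      integral_const_mul, setIntegral_const, smul_eq_mul, Measure.real, ← hV] at h1
    have h2 : M * V / u * Real.exp (-(ε / 2) / t) * (u * Real.exp (-(f x0 + ε / 2) / t)) ≤
        M * V / u * Real.exp (-(ε / 2) / t) * ∫ x in K, Real.exp (-f x / t) :=
      mul_le_mul_of_nonneg_left (h t ht) (by positivity)
    have h3 : M * V / u * Real.exp (-(ε / 2) / t) * (u * Real.exp (-(f x0 + ε / 2) / t)) =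
        V * (M * Real.exp (-(f x0 + ε) / t)) := by
      have : Real.exp (-(f x0 + ε) / t) =
          Real.exp (-(ε / 2) / t) * Real.exp (-(f x0 + ε / 2) / t) := by
        rw [← Real.exp_add]; congr 1; ring
      rw [this]; field_simp
    linarith
  refine tendsto_order.2 ⟨fun a ha => ?_, fun a ha => ?_⟩
  · filter_upwards [self_mem_nhdsWithin] with t ht
    exact ha.trans_le (hlow t ht)
  · obtain ⟨C, hC⟩ := hup ((a - f x0) / 2) (by linarith)
    set δ := (a - f x0) / 2 with hδ
    have hδ0 : 0 < δ := by rw [hδ]; linarith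
    have hlim : Filter.Tendsto (fun t : ℝ => f x0 + δ + C * Real.exp (-(δ / 2) / t))
        (nhdsWithin 0 (Set.Ioi 0)) (nhds (f x0 + δ + C * 0)) := by
      refine tendsto_const_nhds.add (tendsto_const_nhds.mul (Real.tendsto_exp_atBot.comp ?_))
      simp only [div_eq_mul_inv]
      exact tendsto_inv_nhdsGT_zero.const_mul_atTop_of_neg (by linarith)
    filter_upwards [self_mem_nhdsWithin, hlim.eventually_lt_const (u := a) (by linarith)]
      with t ht h2
    exact (hC t ht).trans_lt h2
end

section
/- Let f : ℝⁿ → ℝ be continuous and let K ⊆ ℝⁿ be a convex body. Then min_{x∈K} f(x) = inf{ ∫_K h(x) f(x) dx : h a sum of squares of polynomials with ∫_K h(x) dx = 1 }, where the infimum is over sum-of-squares polynomial densities of arbitrary degree. -/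
open MeasureTheory Real

lemma approx_poly (n : ℕ) (φ : (Fin n → ℝ) → ℝ) (hφ : Continuous φ)
    (K : Set (Fin n → ℝ)) (hK : IsCompact K) (δ : ℝ) (hδ : 0 < δ) :
    ∃ p : MvPolynomial (Fin n) ℝ, ∀ x ∈ K, |MvPolynomial.eval x p - φ x| < δ := by
  let X : Fin n → C(Fin n → ℝ, ℝ) := fun i => ⟨fun x => x i, continuous_apply i⟩
  let F : MvPolynomial (Fin n) ℝ →ₐ[ℝ] C(Fin n → ℝ, ℝ) := MvPolynomial.aeval X
  have hF : ∀ p x, F p x = MvPolynomial.eval x p := by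
    intro p x
    induction p using MvPolynomial.induction_on with
    | C a => simp [F]
    | add p q hp hq => simp [hp, hq]
    | mul_X p i hp => simp [hp]; simp [F, X]
  have hsep : F.range.SeparatesPoints := by
    intro x y hxy
    obtain ⟨i, hi⟩ := Function.ne_iff.1 hxy
    refine ⟨fun x => x i, ⟨X i, ⟨MvPolynomial.X i, by simp [F]⟩, rfl⟩, hi⟩
  obtain ⟨g, ⟨p, hp⟩, h⟩ :=
    ContinuousMap.exists_mem_subalgebra_near_continuous_of_isCompact_of_separatesPoints
      hsep ⟨φ, hφ⟩ hK hδ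
  refine ⟨p, fun x hx => ?_⟩
  have h2 := h x hx
  have e : g x = MvPolynomial.eval x p := by rw [← hF]; exact (congrArg (fun q => q x) hp).symm
  rw [e] at h2
  simpa [Real.norm_eq_abs] using h2

lemma exists_neg (n : ℕ) (w : (Fin n → ℝ) → ℝ) (hw : Continuous w)
    (K : Set (Fin n → ℝ)) (hK : IsCompact K) (x₀ : Fin n → ℝ) (hx₀ : x₀ ∈ interior K)
    (hneg : w x₀ < 0) :
    ∃ p : MvPolynomial (Fin n) ℝ, ∫ x in K, MvPolynomial.eval x p ^ 2 * w x < 0 := by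
  set φ : (Fin n → ℝ) → ℝ := fun x => max 0 (-w x) with hφd
  have hφ : Continuous φ := by fun_prop
  have hφ0 : ∀ x, 0 ≤ φ x := fun x => le_max_left _ _
  have e : ∀ x, φ x ^ 2 * w x = - φ x ^ 3 := by
    intro x
    rcases le_total (w x) 0 with h | h
    · have : φ x = -w x := max_eq_right (by linarith)
      rw [this]; ring
    · have : φ x = 0 := max_eq_left (by linarith)
      rw [this]; ring
  have hc : Continuous fun x => φ x ^ 3 := by fun_prop
  have hpos : 0 < ∫ x in K, φ x ^ 3 := by
    rw [setIntegral_pos_iff_support_of_nonneg_ae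
      (Filter.Eventually.of_forall fun x => pow_nonneg (hφ0 x) 3)
      (hc.continuousOn.integrableOn_compact hK)]
    have ho : IsOpen ({x | w x < 0} ∩ interior K) :=
      (isOpen_lt hw continuous_const).inter isOpen_interior
    refine lt_of_lt_of_le (ho.measure_pos volume ⟨x₀, hneg, hx₀⟩) (measure_mono ?_)
    rintro x ⟨h1, h2⟩
    refine ⟨?_, interior_subset h2⟩
    have h1 : w x < 0 := h1
    have : 0 < φ x := lt_max_of_lt_right (by linarith)
    exact (pow_pos this 3).ne'
  set c := ∫ x in K, φ x ^ 3
  obtain ⟨M, hM⟩ := hK.exists_bound_of_continuousOn hφ.continuousOn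
  obtain ⟨W, hW⟩ := hK.exists_bound_of_continuousOn hw.continuousOn
  have hx₀K := interior_subset hx₀
  have hM0 : 0 ≤ M := (norm_nonneg _).trans (hM x₀ hx₀K)
  have hW0 : 0 ≤ W := (norm_nonneg _).trans (hW x₀ hx₀K)
  set V := volume.real K
  have hV0 : 0 ≤ V := measureReal_nonneg
  set B := (2 * M + 1) * W * V
  have hB0 : 0 ≤ B := by positivity
  obtain ⟨δ, hδ, hδ1, hδB⟩ : ∃ δ : ℝ, 0 < δ ∧ δ ≤ 1 ∧ δ * B < c := by
    refine ⟨min 1 (c / (B + 1)), lt_min one_pos (by positivity), min_le_left _ _, ?_⟩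
    calc _ ≤ c / (B + 1) * B := by gcongr; exact min_le_right _ _
      _ < c := by
        rw [div_mul_eq_mul_div, div_lt_iff₀ (by positivity)]; nlinarith
  obtain ⟨p, hp⟩ := approx_poly n φ hφ K hK δ hδ
  have hpc : Continuous fun x => MvPolynomial.eval x p := MvPolynomial.continuous_eval p
  refine ⟨p, ?_⟩
  have hb : ‖∫ x in K, (MvPolynomial.eval x p ^ 2 * w x + φ x ^ 3)‖ ≤ (δ * (2 * M + 1) * W) * V := by
    apply norm_setIntegral_le_of_norm_le_const hK.measure_lt_top
    intro x hx
    have h1 := hp x hx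
    have h2 := hM x hx
    have h3 := hW x hx
    have : MvPolynomial.eval x p ^ 2 * w x + φ x ^ 3 =
      (MvPolynomial.eval x p - φ x) * (MvPolynomial.eval x p + φ x) * w x := by
      linear_combination e x
    rw [this, norm_mul, norm_mul]
    have h4 : ‖MvPolynomial.eval x p + φ x‖ ≤ 2 * M + 1 := by
      rw [Real.norm_eq_abs] at *
      rw [abs_le] at *
      rw [abs_lt] at h1
      constructor <;> linarith
    have h1' : ‖MvPolynomial.eval x p - φ x‖ ≤ δ := h1.le
    gcongr
  rw [integral_add ((by fun_prop : Continuous fun x => MvPolynomial.eval x p ^ 2 * w x).continuousOn.integrableOn_compact hK)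
    (hc.continuousOn.integrableOn_compact hK), Real.norm_eq_abs, abs_le] at hb
  have : (δ * (2 * M + 1) * W) * V = δ * B := by ring
  have := hb.2
  change _ + c ≤ _ at this
  linarith

theorem stmt17 (n : ℕ) (f : (Fin n → ℝ) → ℝ) (hf : Continuous f)
    (K : Set (Fin n → ℝ)) (hKcomp : IsCompact K) (hKconv : Convex ℝ K)
    (hKint : (interior K).Nonempty) :
    sInf (f '' K) =
      sInf { y : ℝ | ∃ (m : ℕ) (p : Fin m → MvPolynomial (Fin n) ℝ),
        (∫ x in K, MvPolynomial.eval x (∑ i, p i ^ 2)) = 1 ∧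
        y = ∫ x in K, MvPolynomial.eval x (∑ i, p i ^ 2) * f x } := by
  obtain ⟨x₀, hx₀, hmin⟩ := hKcomp.exists_isMinOn (hKint.mono interior_subset) hf.continuousOn
  have hmin' : ∀ x ∈ K, f x₀ ≤ f x := fun x hx => hmin hx
  have hL : sInf (f '' K) = f x₀ :=
    IsLeast.csInf_eq ⟨⟨x₀, hx₀, rfl⟩, by rintro _ ⟨x, hx, rfl⟩; exact hmin' x hx⟩
  rw [hL]
  have hint : ∀ g : (Fin n → ℝ) → ℝ, Continuous g → IntegrableOn g K :=
    fun g hg => hg.continuousOn.integrableOn_compact hKcomp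
  have key : ∀ c, f x₀ < c → ∃ y ∈ { y : ℝ | ∃ (m : ℕ) (p : Fin m → MvPolynomial (Fin n) ℝ),
        (∫ x in K, MvPolynomial.eval x (∑ i, p i ^ 2)) = 1 ∧
        y = ∫ x in K, MvPolynomial.eval x (∑ i, p i ^ 2) * f x }, y < c := by
    intro c hc
    obtain ⟨x₁, h1, h2⟩ : ({x | f x < c} ∩ interior K).Nonempty := by
      have := (hKconv.closure_interior_eq_closure_of_nonempty_interior hKint).ge
        (subset_closure hx₀)
      exact mem_closure_iff.1 this _ (isOpen_lt hf continuous_const) hc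
    have h1 : f x₁ < c := h1
    obtain ⟨p, hp⟩ := exists_neg n (fun x => f x - c) (by fun_prop) K hKcomp x₁ h2
      (by linarith)
    have hpc : Continuous fun x => MvPolynomial.eval x p := MvPolynomial.continuous_eval p
    set I := ∫ x in K, MvPolynomial.eval x p ^ 2 with hI
    have hI0 : 0 ≤ I := integral_nonneg fun x => sq_nonneg _
    have hlow : (f x₀ - c) * I ≤ ∫ x in K, MvPolynomial.eval x p ^ 2 * (f x - c) := by
      rw [hI, ← integral_const_mul]
      refine setIntegral_mono_on (hint _ (by fun_prop)) (hint _ (by fun_prop))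
        hKcomp.measurableSet fun x hx => ?_
      nlinarith [hmin' x hx, sq_nonneg (MvPolynomial.eval x p)]
    have hIpos : 0 < I := by
      rcases hI0.eq_or_lt with h | h
      · rw [← h] at hlow; linarith
      · exact h
    have hs : ∫ x in K, MvPolynomial.eval x p ^ 2 * (f x - c) =
        (∫ x in K, MvPolynomial.eval x p ^ 2 * f x) - c * I := by
      rw [hI, ← integral_const_mul, ← integral_sub (hint _ (by fun_prop)) (hint _ (by fun_prop))]
      congr 1; ext x; ring
    have he : ∀ x, MvPolynomial.eval x (∑ _i : Fin 1, (MvPolynomial.C (√I)⁻¹ * p) ^ 2) =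
        I⁻¹ * MvPolynomial.eval x p ^ 2 := by
      intro x
      simp [mul_pow, Real.sq_sqrt hI0]
    refine ⟨_, ⟨1, fun _ => MvPolynomial.C (√I)⁻¹ * p, ?_, rfl⟩, ?_⟩
    · simp_rw [he]
      rw [integral_const_mul]
      exact inv_mul_cancel₀ hIpos.ne'
    · simp_rw [he, mul_assoc]
      rw [integral_const_mul, inv_mul_lt_iff₀ hIpos]
      linarith
  symm
  apply csInf_eq_of_forall_ge_of_forall_gt_exists_lt
  · obtain ⟨y, hy, -⟩ := key (f x₀ + 1) (by linarith)
    exact ⟨y, hy⟩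
  · rintro _ ⟨m, p, h1, rfl⟩
    have hpc : Continuous fun x => MvPolynomial.eval x (∑ i, p i ^ 2) :=
      MvPolynomial.continuous_eval _
    calc f x₀ = ∫ x in K, MvPolynomial.eval x (∑ i, p i ^ 2) * f x₀ := by
          rw [integral_mul_const, h1, one_mul]
      _ ≤ _ := by
        refine setIntegral_mono_on (hint _ (hpc.mul continuous_const)) (hint _ (hpc.mul hf))
          hKcomp.measurableSet fun x hx => ?_
        refine mul_le_mul_of_nonneg_left (hmin' x hx) ?_
        rw [map_sum]
        exact Finset.sum_nonneg fun i _ => by rw [map_pow]; exact sq_nonneg _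
  · exact key
end
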